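/- Let 0 < α ≤ 1 and p = 1. Assume Φ is a positive increasing function on (0,∞) satisfying Φ(2r) ≤ D·Φ(r) for all r > 0 with doubling constant 1 ≤ D < 2ⁿ. Then there exists a constant C > 0, independent of f, such that for every f ∈ L^{1,Φ}(ℝⁿ), ‖S_α(f)‖_{WL^{1,Φ}} ≤ C ‖f‖_{L^{1,Φ}}; that is, for every ball B(x₀,r) and every σ > 0, σ·|{x ∈ B(x₀,r) : S_α(f)(x) > σ}| ≤ C Φ(r) ‖f‖_{L^{1,Φ}}. -/

import Mathlib

/-!
The weak bound comes from a weak type `(1,1)` estimate combined with the splitting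
`f = f₁ + f₂` into a near part on `B(x₀, 2^q r)` and a far part.

*Discretisation.*  `S_α` is dominated pointwise by dyadic square functions, so that Wilson's
supremum over test functions never has to be measurable.  For a mesh `δ > 0` and a dyadic cube `Q`
of side `ℓ(Q) = δ 2^j`, `j ≥ 0`, let `a_Q(f)` (`aQ`) be the supremum of `|∫ ψ f|` over
the mean-zero `ψ` supported in an enlarged ball `B_Q` of `Q` with Hölder constant `ℓ(Q)^{-n-α}`.  The
functions `φ_t(y - ·)` with `y ∈ Q`, `ℓ(Q) ≤ t < 2ℓ(Q)` are of this kind, so the part of the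
integral defining `S_α(f)(x)²` over `t ≥ δ` is at most `∑ a_Q(f)²` over the `Q` with `x ∈ B_Q`
(`sqFun`, `truncSq_le_sqFun`).  Bounds uniform in `δ` pass to `S_α` by letting `δ → 0` through
`r 2^{-N}` (`volume_Salpha_le`).

*Weak type `(1,1)`, uniform in `δ`* (`weak_type`).  Two test functions adapted to cubes `Q`, `Q'`
are almost orthogonal, with a gain `2^{-α |j - j'|}`, because of their cancellation and smoothness
(`kernel_le`).  Schur's test gives the `L²` bound `tsum_sq_le`.  A Calderón–Zygmund decomposition at
height `σ` along the same grid (`exists_stopping`) reduces the rest to mean-zero functions `u`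
on a dyadic cube `P`: away from a dilate of `P` only the cubes `Q` at least as large as `P`
see `u`, and there `∑ a_Q(u) |B_Q| ≤ C ‖u‖₁` (`tsum_bad_le`).  The grid has smallest cubes, so a
stopping cube of generation `0` need not have a large average; this is harmless, as
no smaller cubes occur in the sum.

*Morrey estimate.*  For `x ∈ B(x₀, r)` only the cubes of side `2^k r`, `k ≥ 0`, see `f₂`, and
there `a_Q(f₂) ≤ C A Φ(2^{q+k} r) / (2^k r)^n ≤ C A (Φ(r) / r^n) (D / 2ⁿ)^k`.  Since `D < 2ⁿ`, the sum
converges and the square function of `f₂` is at most `C A Φ(r) / r^n` on `B(x₀, r)` (`sqFun_far_le`).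
If `σ` is at most a multiple of this bound, the estimate follows from
`|B(x₀, r)| = c r^n`; otherwise the level set is one of the square function of `f₁`, and the
weak type estimate applies, with `∫ |f₁| ≤ A D^q Φ(r)`.
-/

open MeasureTheory Metric Set

noncomputable section

/-- `ℝⁿ` as a Euclidean space. -/
abbrev Rn (n : ℕ) := EuclideanSpace ℝ (Fin n)

/-- The family `𝒞_α` of real functions supported in the closed unit ball, with vanishing
integral, satisfying the Hölder condition `|φ x - φ x'| ≤ |x - x'|^α`. -/
def Calpha (n : ℕ) (α : ℝ) : Set (Rn n → ℝ) :=
  {φ | (∀ x : Rn n, 1 < ‖x‖ → φ x = 0) ∧ ((∫ x, φ x) = 0) ∧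
    ∀ x x' : Rn n, |φ x - φ x'| ≤ ‖x - x'‖ ^ α}

/-- `A_α(f)(y,t) = sup_{φ ∈ 𝒞_α} |(f * φ_t)(y)|`, where `φ_t(x) = t⁻ⁿ φ(x/t)`. -/
def Aalpha {n : ℕ} (α : ℝ) (f : Rn n → ℝ) (y : Rn n) (t : ℝ) : ℝ :=
  ⨆ φ ∈ Calpha n α, |∫ z, (t ^ n)⁻¹ * φ (t⁻¹ • (y - z)) * f z|

/-- The intrinsic square function `S_{α,β}` of aperture `β`. -/
def Salpha {n : ℕ} (α β : ℝ) (f : Rn n → ℝ) (x : Rn n) : ℝ :=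
  Real.sqrt (∫ p in {p : Rn n × ℝ | 0 < p.2 ∧ dist x p.1 < β * p.2},
    Aalpha α f p.1 p.2 ^ 2 / p.2 ^ (n + 1))

/-- The intrinsic `g^*_λ` function. -/
def gstarAlpha {n : ℕ} (α lam : ℝ) (f : Rn n → ℝ) (x : Rn n) : ℝ :=
  Real.sqrt (∫ p in {p : Rn n × ℝ | 0 < p.2},
    (p.2 / (p.2 + dist x p.1)) ^ (lam * n) * Aalpha α f p.1 p.2 ^ 2 / p.2 ^ (n + 1))

/-- The intrinsic Littlewood–Paley `g`-function. -/
def gAlpha {n : ℕ} (α : ℝ) (f : Rn n → ℝ) (x : Rn n) : ℝ :=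
  Real.sqrt (∫ t in Ioi (0 : ℝ), Aalpha α f x t ^ 2 / t)

/-- The commutator kernel
`sup_{φ ∈ 𝒞_α} |∫ (b x - b z) φ_t (y - z) f z dz|`. -/
def commAalpha {n : ℕ} (α : ℝ) (b f : Rn n → ℝ) (x y : Rn n) (t : ℝ) : ℝ :=
  ⨆ φ ∈ Calpha n α, |∫ z, (b x - b z) * ((t ^ n)⁻¹ * φ (t⁻¹ • (y - z))) * f z|

/-- The commutator `[b, S_α]`. -/
def commS {n : ℕ} (α : ℝ) (b f : Rn n → ℝ) (x : Rn n) : ℝ :=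
  Real.sqrt (∫ p in {p : Rn n × ℝ | 0 < p.2 ∧ dist x p.1 < p.2},
    commAalpha α b f x p.1 p.2 ^ 2 / p.2 ^ (n + 1))

/-- The commutator `[b, g^*_{λ,α}]`. -/
def commGstar {n : ℕ} (α lam : ℝ) (b f : Rn n → ℝ) (x : Rn n) : ℝ :=
  Real.sqrt (∫ p in {p : Rn n × ℝ | 0 < p.2},
    (p.2 / (p.2 + dist x p.1)) ^ (lam * n) * commAalpha α b f x p.1 p.2 ^ 2 / p.2 ^ (n + 1))

/-- The commutator `[b, g_α]`. -/
def commG {n : ℕ} (α : ℝ) (b f : Rn n → ℝ) (x : Rn n) : ℝ :=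
  Real.sqrt (∫ t in Ioi (0 : ℝ), commAalpha α b f x x t ^ 2 / t)

/-- `A` is an admissible constant for `f` in the generalized Morrey space `L^{p,Φ}`:
`∫_{B(x₀,r)} |f|^p ≤ A^p Φ(r)` for all balls.  The Morrey norm `‖f‖_{L^{p,Φ}}` is the least
such `A ≥ 0`, and `f ∈ L^{p,Φ}` iff some such `A` exists. -/
def MorreyBound {n : ℕ} (p : ℝ) (Φ : ℝ → ℝ) (f : Rn n → ℝ) (A : ℝ) : Prop :=
  ∀ (x₀ : Rn n) (r : ℝ), 0 < r → (∫ x in ball x₀ r, |f x| ^ p) ≤ A ^ p * Φ r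

/-- `A` is an admissible constant for `g` in the weak space `WL^{1,Φ}`:
`σ |{x ∈ B(x₀,r) : g x > σ}| ≤ A Φ(r)` for all balls and all `σ > 0`. -/
def WeakMorreyBound {n : ℕ} (Φ : ℝ → ℝ) (g : Rn n → ℝ) (A : ℝ) : Prop :=
  ∀ (x₀ : Rn n) (r : ℝ), 0 < r → ∀ σ : ℝ, 0 < σ →
    σ * (volume {x ∈ ball x₀ r | σ < g x}).toReal ≤ A * Φ r

/-- Average of `b` over the ball `B(x₀,r)`. -/
def ballAvg {n : ℕ} (b : Rn n → ℝ) (x₀ : Rn n) (r : ℝ) : ℝ :=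
  (volume (ball x₀ r)).toReal⁻¹ * ∫ y in ball x₀ r, b y

/-- `b ∈ BMO(ℝⁿ)`. -/
def IsBMO {n : ℕ} (b : Rn n → ℝ) : Prop :=
  LocallyIntegrable b volume ∧ ∃ K : ℝ, ∀ (x₀ : Rn n) (r : ℝ), 0 < r →
    (∫ x in ball x₀ r, |b x - ballAvg b x₀ r|) ≤ K * (volume (ball x₀ r)).toReal

/-- The Hardy–Littlewood maximal function. -/
def hlMaximal {n : ℕ} (g : Rn n → ℝ) (x : Rn n) : ℝ :=
  ⨆ (x₀ : Rn n) (r : ℝ), ⨆ (_ : 0 < r ∧ x ∈ ball x₀ r),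
    (volume (ball x₀ r)).toReal⁻¹ * ∫ y in ball x₀ r, |g y|

/-! ### Dyadic grids -/

section

/-- The side length `δ 2^j` of the `j`-th generation of the dyadic grid with finest mesh `δ`. -/
def side (δ : ℝ) (j : ℕ) : ℝ := δ * 2 ^ j

/-- The corner of the dyadic cube indexed by the generation `Q.1` and the lattice point `Q.2`. -/
def corner {n : ℕ} (δ : ℝ) (Q : ℕ × (Fin n → ℤ)) : Rn n :=
  WithLp.toLp 2 (fun i => side δ Q.1 * (Q.2 i : ℝ))

/-- The lattice point of the generation-`j` dyadic cube that contains `x`. -/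
def cellIdx {n : ℕ} (δ : ℝ) (j : ℕ) (x : Rn n) : Fin n → ℤ := fun i => ⌊x i / side δ j⌋

/-- The half-open dyadic cube with index `Q`. -/
def cube {n : ℕ} (δ : ℝ) (Q : ℕ × (Fin n → ℤ)) : Set (Rn n) := {x | cellIdx δ Q.1 x = Q.2}

/-- The dilation factor `n + 2` relating a dyadic cube to its enlarged ball: a point `x` within
distance `2 ℓ(Q)` of the cube `Q` lies in the enlarged ball. -/
def dil (n : ℕ) : ℝ := n + 2

/-- The enlarged ball of a dyadic cube, centred at its corner. -/
def bigBall {n : ℕ} (δ : ℝ) (Q : ℕ × (Fin n → ℤ)) : Set (Rn n) :=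
  closedBall (corner δ Q) (dil n * side δ Q.1)

/-- The volume of the unit ball. -/
def unitVol (n : ℕ) : ℝ := volume.real (ball (0 : Rn n) 1)

variable {n : ℕ} {δ : ℝ}

lemma side_pos (hδ : 0 < δ) (j : ℕ) : 0 < side δ j := by unfold side; positivity

lemma side_add (j k : ℕ) : side δ (j + k) = side δ j * 2 ^ k := by
  unfold side; rw [pow_add]; ring

lemma side_mono (hδ : 0 < δ) {i j : ℕ} (h : i ≤ j) : side δ i ≤ side δ j := by
  unfold side
  exact mul_le_mul_of_nonneg_left (pow_le_pow_right₀ (by norm_num) h) hδ.le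

lemma dil_ge_two (n : ℕ) : 2 ≤ dil n := by unfold dil; linarith [(Nat.cast_nonneg n : (0:ℝ) ≤ n)]

lemma dil_pos (n : ℕ) : 0 < dil n := by linarith [dil_ge_two n]

lemma le_dil (n : ℕ) : (n : ℝ) ≤ dil n := by unfold dil; linarith

lemma unitVol_pos (n : ℕ) : 0 < unitVol n :=
  ENNReal.toReal_pos (measure_ball_pos _ _ one_pos).ne' measure_ball_lt_top.ne

lemma volume_closedBall_eq (x : Rn n) {r : ℝ} (hr : 0 ≤ r) :
    volume (closedBall x r) = ENNReal.ofReal (r ^ n * unitVol n) := by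
  rw [Measure.addHaar_closedBall _ _ hr, ENNReal.ofReal_mul (by positivity), unitVol,
    measureReal_def, ENNReal.ofReal_toReal measure_ball_lt_top.ne]
  simp

lemma mem_cube_iff {Q : ℕ × (Fin n → ℤ)} {x : Rn n} (hδ : 0 < δ) :
    x ∈ cube δ Q ↔ ∀ i, x i ∈ Ico (side δ Q.1 * Q.2 i) (side δ Q.1 * Q.2 i + side δ Q.1) := by
  have hs := side_pos hδ Q.1
  simp only [cube, mem_ofPred_eq, funext_iff, cellIdx, Int.floor_eq_iff, mem_Ico]
  refine forall_congr' fun i => ?_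
  rw [le_div_iff₀ hs, div_lt_iff₀ hs]
  constructor <;> rintro ⟨h1, h2⟩ <;> constructor <;> nlinarith

lemma cube_eq_preimage (hδ : 0 < δ) (Q : ℕ × (Fin n → ℤ)) :
    cube δ Q = (MeasurableEquiv.toLp 2 (Fin n → ℝ)).symm ⁻¹' (Set.univ.pi fun i =>
      Ico (side δ Q.1 * Q.2 i) (side δ Q.1 * Q.2 i + side δ Q.1)) := by
  ext x
  rw [mem_cube_iff hδ]
  simp [Set.mem_pi]

lemma measurableSet_cube (hδ : 0 < δ) (Q : ℕ × (Fin n → ℤ)) : MeasurableSet (cube δ Q) := by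
  rw [cube_eq_preimage hδ]
  exact (MeasurableEquiv.measurable _) (MeasurableSet.univ_pi fun i => measurableSet_Ico)

lemma volume_cube (hδ : 0 < δ) (Q : ℕ × (Fin n → ℤ)) :
    volume (cube δ Q) = ENNReal.ofReal (side δ Q.1 ^ n) := by
  rw [cube_eq_preimage hδ,
    (EuclideanSpace.volume_preserving_symm_measurableEquiv_toLp (Fin n)).measure_preimage
      (MeasurableSet.univ_pi fun i => measurableSet_Ico).nullMeasurableSet, volume_pi_pi]
  simp [ENNReal.ofReal_pow (side_pos hδ _).le]

lemma dist_corner_le {Q : ℕ × (Fin n → ℤ)} {x : Rn n} (hδ : 0 < δ) (hx : x ∈ cube δ Q) :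
    dist x (corner δ Q) ≤ n * side δ Q.1 := by
  have hs := side_pos hδ Q.1
  rw [mem_cube_iff hδ] at hx
  rw [EuclideanSpace.dist_eq]
  apply Real.sqrt_le_iff.2 ⟨by positivity, ?_⟩
  have h1 : ∀ i ∈ (Finset.univ : Finset (Fin n)), dist (x i) ((corner δ Q) i) ^ 2 ≤ side δ Q.1 ^ 2 := by
    intro i _
    obtain ⟨h1, h2⟩ := hx i
    apply pow_le_pow_left₀ dist_nonneg
    simp only [corner, Real.dist_eq]
    rw [abs_le]; constructor <;> linarith
  refine (Finset.sum_le_sum h1).trans ?_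
  simp only [Finset.sum_const, Finset.card_univ, Fintype.card_fin, nsmul_eq_mul, mul_pow]
  have : (n:ℝ) ≤ (n:ℝ)^2 := by exact_mod_cast Nat.le_self_pow (by norm_num) n
  gcongr

lemma cellIdx_add (j k : ℕ) (x : Rn n) :
    cellIdx δ (j + k) x = fun i => cellIdx δ j x i / ((2 ^ k : ℕ) : ℤ) := by
  funext i
  simp only [cellIdx]
  rw [← Int.floor_div_natCast, side_add, div_mul_eq_div_div]
  push_cast; rfl

/-- Dyadic cubes are nested: points sharing a cube share all its ancestors. -/
lemma cellIdx_congr {i j : ℕ} (h : i ≤ j) {x y : Rn n} (hxy : cellIdx δ i x = cellIdx δ i y) :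
    cellIdx δ j x = cellIdx δ j y := by
  obtain ⟨k, rfl⟩ := Nat.exists_eq_add_of_le h
  rw [cellIdx_add, cellIdx_add, hxy]

/-- A ball of radius `ρ ≥ δ 2^j` contains at most `(3 ρ / (δ 2^j))^n` corners of generation `j`. -/
lemma card_corner_le (hδ : 0 < δ) (j : ℕ) (M : Finset (Fin n → ℤ)) (c : Rn n) {ρ : ℝ}
    (hρ : side δ j ≤ ρ) (hM : ∀ m ∈ M, dist (corner δ (j, m)) c ≤ ρ) :
    (M.card : ℝ) ≤ (3 * ρ / side δ j) ^ n := by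
  have hs := side_pos hδ j
  have hsub : M ⊆ Fintype.piFinset
      (fun i => Finset.Icc ⌈(c i - ρ) / side δ j⌉ ⌊(c i + ρ) / side δ j⌋) := by
    intro m hm
    rw [Fintype.mem_piFinset]
    intro i
    have h1 := (PiLp.dist_apply_le (corner δ (j, m)) c i).trans (hM m hm)
    simp only [corner, Real.dist_eq] at h1
    rw [abs_le] at h1
    rw [Finset.mem_Icc, Int.ceil_le, Int.le_floor, div_le_iff₀ hs, le_div_iff₀ hs]
    constructor <;> linarith [h1.1, h1.2]
  have h2 : (M.card : ℝ) ≤ ((Fintype.piFinset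
      (fun i => Finset.Icc ⌈(c i - ρ) / side δ j⌉ ⌊(c i + ρ) / side δ j⌋)).card : ℝ) := by
    exact_mod_cast Finset.card_le_card hsub
  refine h2.trans ?_
  rw [Fintype.card_piFinset]
  push_cast
  have h3 : ∀ i ∈ (Finset.univ : Finset (Fin n)),
      ((Finset.Icc ⌈(c i - ρ) / side δ j⌉ ⌊(c i + ρ) / side δ j⌋).card : ℝ)
        ≤ 3 * ρ / side δ j := by
    intro i _
    have hr : 1 ≤ ρ / side δ j := by rwa [le_div_iff₀ hs, one_mul]
    have e : 3 * ρ / side δ j = 3 * (ρ / side δ j) := by ring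
    have e1 : (c i - ρ) / side δ j = c i / side δ j - ρ / side δ j := by ring
    have e2 : (c i + ρ) / side δ j = c i / side δ j + ρ / side δ j := by ring
    rw [Int.card_Icc, e, e1, e2]
    set a := c i / side δ j
    set b := ρ / side δ j
    have h5 := Int.floor_le (a + b)
    have h6 := Int.le_ceil (a - b)
    have h7 : (((⌊a + b⌋ + 1 - ⌈a - b⌉).toNat : ℤ) : ℝ) ≤ 3 * b := by
      rw [Int.toNat_eq_max]
      push_cast
      apply max_le <;> linarith
    exact_mod_cast h7
  refine (Finset.prod_le_prod (fun i _ => by positivity) h3).trans ?_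
  rw [Finset.prod_const, Finset.card_univ, Fintype.card_fin]

/-- Summation over cubes, level by level. -/
lemma sum_le_of_levels (u : ℕ × (Fin n → ℤ) → ℝ) (hu : ∀ Q, 0 ≤ u Q) (w : ℕ → ℝ) (W : ℝ)
    (h1 : ∀ j (M : Finset (Fin n → ℤ)), ∑ m ∈ M, u (j, m) ≤ w j)
    (h2 : ∀ J, ∑ j ∈ Finset.range J, w j ≤ W) (F : Finset (ℕ × (Fin n → ℤ))) :
    ∑ Q ∈ F, u Q ≤ W := by
  classical
  set J := F.sup Prod.fst + 1
  have hsub : F ⊆ Finset.range J ×ˢ F.image Prod.snd := by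
    intro Q hQ
    rw [Finset.mem_product, Finset.mem_range]
    exact ⟨Nat.lt_succ_of_le (Finset.le_sup (f := Prod.fst) hQ), Finset.mem_image_of_mem _ hQ⟩
  refine (Finset.sum_le_sum_of_subset_of_nonneg hsub fun _ _ _ => hu _).trans ?_
  rw [Finset.sum_product]
  exact (Finset.sum_le_sum fun j _ => h1 j _).trans (h2 J)

lemma tsum_le_of_sum_ofReal {ι : Type*} (u : ι → ℝ) (hu : ∀ Q, 0 ≤ u Q) (W : ℝ)
    (h : ∀ F : Finset ι, ∑ Q ∈ F, u Q ≤ W) :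
    ∑' Q, ENNReal.ofReal (u Q) ≤ ENNReal.ofReal W := by
  rw [ENNReal.tsum_eq_iSup_sum]
  refine iSup_le fun F => ?_
  rw [← ENNReal.ofReal_sum_of_nonneg fun Q _ => hu Q]
  exact ENNReal.ofReal_le_ofReal (h F)

/-- A one-level sum of terms of size at most `K` that vanish away from a ball. -/
lemma level_sum_le (hδ : 0 < δ) (j : ℕ) (M : Finset (Fin n → ℤ)) (c : Rn n) {ρ K : ℝ}
    (hK : 0 ≤ K) (hρ : side δ j ≤ ρ) (u : (Fin n → ℤ) → ℝ) (hu : ∀ m, u m ≤ K)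
    (hu0 : ∀ m, ρ < dist (corner δ (j, m)) c → u m = 0) :
    ∑ m ∈ M, u m ≤ K * (3 * ρ / side δ j) ^ n := by
  classical
  rw [← Finset.sum_filter_add_sum_filter_not M (fun m => dist (corner δ (j, m)) c ≤ ρ)]
  have h1 : ∑ m ∈ M with ¬ dist (corner δ (j, m)) c ≤ ρ, u m = 0 :=
    Finset.sum_eq_zero fun m hm => hu0 m (not_le.1 (Finset.mem_filter.1 hm).2)
  rw [h1, add_zero]
  refine (Finset.sum_le_card_nsmul _ _ K fun m _ => hu m).trans ?_
  rw [nsmul_eq_mul, mul_comm]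
  exact mul_le_mul_of_nonneg_left
    (card_corner_le hδ j _ c hρ fun m hm => (Finset.mem_filter.1 hm).2) hK

lemma geom_sum_le {q : ℝ} (h0 : 0 ≤ q) (h1 : q < 1) (N : ℕ) :
    ∑ i ∈ Finset.range N, q ^ i ≤ 1 / (1 - q) := by
  rw [← tsum_geometric_of_lt_one h0 h1 |>.trans (one_div _).symm]
  exact (summable_geometric_of_lt_one h0 h1).sum_le_tsum _ fun i _ => by positivity

lemma sum_tail_geom_le {q K : ℝ} (h0 : 0 ≤ q) (h1 : q < 1) (hK : 0 ≤ K) (i J : ℕ) :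
    ∑ j ∈ Finset.range J, (if j < i then 0 else K * q ^ (j - i)) ≤ K / (1 - q) := by
  have hle : Finset.range J ⊆ Finset.range (i + J) := Finset.range_mono (by omega)
  refine (Finset.sum_le_sum_of_subset_of_nonneg hle fun j _ _ => ?_).trans ?_
  · split_ifs <;> positivity
  rw [Finset.sum_range_add]
  have e1 : ∑ j ∈ Finset.range i, (if j < i then 0 else K * q ^ (j - i)) = 0 :=
    Finset.sum_eq_zero fun j hj => if_pos (Finset.mem_range.1 hj)
  rw [e1, zero_add]
  have e2 : ∀ j, (if i + j < i then 0 else K * q ^ (i + j - i)) = K * q ^ j := by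
    intro j; rw [if_neg (by omega)]; simp
  simp only [e2]
  rw [← Finset.mul_sum, div_eq_mul_one_div]
  exact mul_le_mul_of_nonneg_left (geom_sum_le h0 h1 J) hK

lemma sum_two_sided_geom_le {q K : ℝ} (h0 : 0 ≤ q) (h1 : q < 1) (hK : 0 ≤ K) (i J : ℕ) :
    ∑ j ∈ Finset.range J, K * q ^ ((j - i) + (i - j)) ≤ 2 * K / (1 - q) := by
  have hle : Finset.range J ⊆ Finset.range (i + J) := Finset.range_mono (by omega)
  refine (Finset.sum_le_sum_of_subset_of_nonneg hle fun j _ _ => by positivity).trans ?_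
  rw [Finset.sum_range_add]
  have e2 : ∀ j, K * q ^ ((i + j - i) + (i - (i + j))) = K * q ^ j := by
    intro j; congr 2; omega
  have e1 : ∑ j ∈ Finset.range i, K * q ^ ((j - i) + (i - j))
      = ∑ j ∈ Finset.range i, K * q ^ (j + 1) := by
    rw [← Finset.sum_range_reflect (fun j => K * q ^ (j + 1))]
    refine Finset.sum_congr rfl fun j hj => ?_
    have := Finset.mem_range.1 hj
    congr 2; omega
  have e3 : ∑ j ∈ Finset.range i, K * q ^ (j + 1) ≤ ∑ j ∈ Finset.range i, K * q ^ j :=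
    Finset.sum_le_sum fun j _ =>
      mul_le_mul_of_nonneg_left (pow_le_pow_of_le_one h0 h1.le (Nat.le_succ j)) hK
  simp only [e2]
  rw [e1]
  refine (add_le_add_left e3 _).trans ?_
  rw [← Finset.mul_sum, ← Finset.mul_sum]
  have g1 := mul_le_mul_of_nonneg_left (geom_sum_le h0 h1 i) hK
  have g2 := mul_le_mul_of_nonneg_left (geom_sum_le h0 h1 J) hK
  have : 2 * K / (1 - q) = K * (1 / (1 - q)) + K * (1 / (1 - q)) := by ring
  linarith

end

/-! ### Test functions adapted to a dyadic cube -/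

section

variable {n : ℕ} {δ : ℝ}

/-- Test functions adapted to the dyadic cube `Q` of side `s`: mean-zero functions supported in the
enlarged ball of `Q` with Hölder constant `s^{-n-α}`.  For `y ∈ Q` and `s ≤ t < 2s` the functions
`φ_t(y - ·)`, `φ ∈ 𝒞_α`, are of this kind. -/
def Test (n : ℕ) (α δ : ℝ) (Q : ℕ × (Fin n → ℤ)) : Set (Rn n → ℝ) :=
  {ψ | (∀ z, z ∉ bigBall δ Q → ψ z = 0) ∧ (∫ z, ψ z) = 0 ∧
    ∀ z z', |ψ z - ψ z'| ≤ (side δ Q.1 ^ n)⁻¹ * (‖z - z'‖ / side δ Q.1) ^ α}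

variable {α : ℝ} {Q : ℕ × (Fin n → ℤ)} {ψ : Rn n → ℝ}

/-- The sup norm constant of the test functions, in units of `ℓ(Q)^{-n}`. -/
def supC (n : ℕ) : ℝ := 2 * dil n + 1

lemma supC_pos (n : ℕ) : 0 < supC n := by unfold supC; linarith [dil_pos n]

lemma zero_mem_Test (hδ : 0 < δ) : (0 : Rn n → ℝ) ∈ Test n α δ Q := by
  have := side_pos hδ Q.1
  refine ⟨fun _ _ => rfl, by simp, fun z z' => ?_⟩
  simp only [Pi.zero_apply, sub_self, abs_zero]
  positivity

/-- The Hölder condition is compared with a point outside the support, which exists as `0 < n`. -/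
lemma Test.abs_le (hn : 0 < n) (hδ : 0 < δ) (hα1 : α ≤ 1) (hψ : ψ ∈ Test n α δ Q)
    (z : Rn n) : |ψ z| ≤ (side δ Q.1 ^ n)⁻¹ * supC n := by
  have hs := side_pos hδ Q.1
  have hC := supC_pos n
  by_cases hz : z ∈ bigBall δ Q
  swap
  · rw [hψ.1 z hz, abs_zero]; positivity
  set e : Rn n := EuclideanSpace.single ⟨0, hn⟩ (supC n * side δ Q.1)
  have he : ‖e‖ = supC n * side δ Q.1 := by
    simp only [e, PiLp.norm_single, Real.norm_eq_abs]
    exact abs_of_pos (by positivity)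
  have hz' : z + e ∉ bigBall δ Q := by
    intro h
    have h1 : dist (z + e) z ≤ dist (z + e) (corner δ Q) + dist z (corner δ Q) :=
      dist_triangle_right _ _ _
    rw [dist_eq_norm, add_sub_cancel_left, he] at h1
    have h2 := mem_closedBall.1 h
    have h3 := mem_closedBall.1 hz
    unfold supC at h1
    nlinarith
  have h1 := hψ.2.2 z (z + e)
  rw [hψ.1 _ hz', sub_zero, sub_add_cancel_left, norm_neg, he, mul_div_cancel_right₀ _ hs.ne'] at h1
  refine h1.trans (mul_le_mul_of_nonneg_left ?_ (by positivity))
  calc supC n ^ α ≤ supC n ^ (1:ℝ) :=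
        Real.rpow_le_rpow_of_exponent_le (by unfold supC; linarith [dil_pos n]) hα1
    _ = supC n := Real.rpow_one _

lemma Test.continuous (hδ : 0 < δ) (hα0 : 0 < α) (hψ : ψ ∈ Test n α δ Q) : Continuous ψ := by
  have hs := side_pos hδ Q.1
  rw [continuous_iff_continuousAt]
  intro z0
  rw [ContinuousAt, tendsto_iff_dist_tendsto_zero]
  have hg : Continuous fun z : Rn n => (side δ Q.1 ^ n)⁻¹ * (‖z - z0‖ / side δ Q.1) ^ α :=
    continuous_const.mul ((by fun_prop : Continuous fun z : Rn n =>
      ‖z - z0‖ / side δ Q.1).rpow_const fun _ => Or.inr hα0.le)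
  have h0 := hg.tendsto z0
  simp only [sub_self, norm_zero, zero_div, Real.zero_rpow hα0.ne', mul_zero] at h0
  exact squeeze_zero (fun _ => dist_nonneg) (fun z => hψ.2.2 z z0) h0

lemma Test.hasCompactSupport (hψ : ψ ∈ Test n α δ Q) : HasCompactSupport ψ :=
  HasCompactSupport.intro (isCompact_closedBall _ _) fun z hz => hψ.1 z hz

lemma Test.integrable_mul (hδ : 0 < δ) (hα0 : 0 < α) (hψ : ψ ∈ Test n α δ Q) {f : Rn n → ℝ}
    (hf : LocallyIntegrable f volume) : Integrable (fun z => ψ z * f z) := by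
  simpa only [smul_eq_mul] using hf.integrable_smul_left_of_hasCompactSupport
    (Test.continuous hδ hα0 hψ) (Test.hasCompactSupport hψ)

lemma Test.integrable (hδ : 0 < δ) (hα0 : 0 < α) (hψ : ψ ∈ Test n α δ Q) : Integrable ψ :=
  (Test.continuous hδ hα0 hψ).integrable_of_hasCompactSupport (Test.hasCompactSupport hψ)

lemma measurableSet_bigBall (δ : ℝ) (Q : ℕ × (Fin n → ℤ)) : MeasurableSet (bigBall δ Q) :=
  measurableSet_closedBall

lemma integrableOn_bigBall {f : Rn n → ℝ} (hf : LocallyIntegrable f volume)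
    (Q : ℕ × (Fin n → ℤ)) : IntegrableOn f (bigBall δ Q) :=
  hf.integrableOn_isCompact (isCompact_closedBall _ _)

lemma Test.abs_integral_le (hn : 0 < n) (hδ : 0 < δ) (hα0 : 0 < α) (hα1 : α ≤ 1)
    (hψ : ψ ∈ Test n α δ Q) {f : Rn n → ℝ} (hf : LocallyIntegrable f volume) :
    |∫ z, ψ z * f z| ≤ (side δ Q.1 ^ n)⁻¹ * supC n * ∫ z in bigBall δ Q, |f z| := by
  refine abs_integral_le_integral_abs.trans ?_
  rw [← integral_const_mul, ← integral_indicator (measurableSet_bigBall δ Q)]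
  refine integral_mono (Test.integrable_mul hδ hα0 hψ hf).abs ?_ fun z => ?_
  · exact (integrable_indicator_iff (measurableSet_bigBall δ Q)).2
      ((Integrable.abs (integrableOn_bigBall hf Q)).const_mul _)
  · simp only [indicator]
    split_ifs with h
    · rw [abs_mul]
      exact mul_le_mul_of_nonneg_right (Test.abs_le hn hδ hα1 hψ z) (abs_nonneg _)
    · rw [hψ.1 z h]; simp

/-- Cancellation: pairing a mean-zero function concentrated near `p` with a test function of a
larger cube gains a power of the ratio of scales. -/
lemma Test.abs_integral_le_of_cancel (hδ : 0 < δ) (hα0 : 0 < α)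
    (hψ : ψ ∈ Test n α δ Q) {u : Rn n → ℝ} (hu : Integrable u) (hu0 : ∫ z, u z = 0)
    {p : Rn n} {ρ : ℝ} (hsupp : ∀ z, ρ < dist z p → u z = 0) :
    |∫ z, ψ z * u z| ≤ (side δ Q.1 ^ n)⁻¹ * (ρ / side δ Q.1) ^ α * ∫ z, |u z| := by
  have hs := side_pos hδ Q.1
  have hint := Test.integrable_mul hδ hα0 hψ hu.locallyIntegrable
  have e : ∫ z, ψ z * u z = ∫ z, (ψ z - ψ p) * u z := by
    simp only [sub_mul]
    rw [integral_sub hint (hu.const_mul _), integral_const_mul, hu0, mul_zero, sub_zero]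
  have hint2 : Integrable fun z => (ψ z - ψ p) * u z := by
    simp only [sub_mul]
    exact hint.sub (hu.const_mul _)
  rw [e, ← integral_const_mul]
  refine abs_integral_le_integral_abs.trans (integral_mono hint2.abs (hu.abs.const_mul _) fun z => ?_)
  simp only [abs_mul]
  by_cases hz : ρ < dist z p
  · rw [hsupp z hz]; simp
  · refine mul_le_mul_of_nonneg_right ((hψ.2.2 z p).trans ?_) (abs_nonneg _)
    rw [not_lt, dist_eq_norm] at hz
    gcongr

lemma Test.integral_eq_zero_of_far (hψ : ψ ∈ Test n α δ Q) {u : Rn n → ℝ}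
    {p : Rn n} {ρ : ℝ} (hsupp : ∀ z, ρ < dist z p → u z = 0)
    (hfar : dil n * side δ Q.1 + ρ < dist (corner δ Q) p) : ∫ z, ψ z * u z = 0 := by
  have : (fun z => ψ z * u z) = fun _ => (0 : ℝ) := by
    funext z
    by_cases hz : z ∈ bigBall δ Q
    · have h1 := mem_closedBall'.1 hz
      have h2 := dist_triangle (corner δ Q) z p
      rw [hsupp z (by linarith), mul_zero]
    · rw [hψ.1 z hz, zero_mul]
  rw [this]; simp

/-! ### The discrete intrinsic functional -/

/-- The largest pairing of `f` with a test function of `Q`: a discrete version of `A_α f`. -/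
def aQ (α δ : ℝ) (f : Rn n → ℝ) (Q : ℕ × (Fin n → ℤ)) : ℝ :=
  ⨆ ψ : Test n α δ Q, |∫ z, (ψ : Rn n → ℝ) z * f z|

lemma aQ_nonneg (f : Rn n → ℝ) : 0 ≤ aQ α δ f Q := Real.iSup_nonneg fun _ => abs_nonneg _

lemma aQ_le {f : Rn n → ℝ} {K : ℝ} (hK : 0 ≤ K)
    (h : ∀ ψ ∈ Test n α δ Q, |∫ z, ψ z * f z| ≤ K) : aQ α δ f Q ≤ K :=
  Real.iSup_le (fun ψ => h ψ ψ.2) hK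

lemma le_aQ (hn : 0 < n) (hδ : 0 < δ) (hα0 : 0 < α) (hα1 : α ≤ 1) {f : Rn n → ℝ}
    (hf : LocallyIntegrable f volume) (hψ : ψ ∈ Test n α δ Q) :
    |∫ z, ψ z * f z| ≤ aQ α δ f Q :=
  le_ciSup (f := fun ψ : Test n α δ Q => |∫ z, (ψ : Rn n → ℝ) z * f z|)
    ⟨_, by rintro _ ⟨ψ, rfl⟩; exact Test.abs_integral_le hn hδ hα0 hα1 ψ.2 hf⟩ ⟨ψ, hψ⟩

lemma aQ_le_ball (hn : 0 < n) (hδ : 0 < δ) (hα0 : 0 < α) (hα1 : α ≤ 1) {f : Rn n → ℝ}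
    (hf : LocallyIntegrable f volume) :
    aQ α δ f Q ≤ (side δ Q.1 ^ n)⁻¹ * supC n * ∫ z in bigBall δ Q, |f z| := by
  have := side_pos hδ Q.1
  have := supC_pos n
  exact aQ_le (mul_nonneg (by positivity) (integral_nonneg fun _ => abs_nonneg _))
    fun ψ hψ => Test.abs_integral_le hn hδ hα0 hα1 hψ hf

lemma aQ_add_le (hn : 0 < n) (hδ : 0 < δ) (hα0 : 0 < α) (hα1 : α ≤ 1) {f g : Rn n → ℝ}
    (hf : LocallyIntegrable f volume) (hg : LocallyIntegrable g volume) :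
    aQ α δ (fun z => f z + g z) Q ≤ aQ α δ f Q + aQ α δ g Q := by
  refine aQ_le (add_nonneg (aQ_nonneg f) (aQ_nonneg g)) fun ψ hψ => ?_
  simp only [mul_add]
  rw [integral_add (Test.integrable_mul hδ hα0 hψ hf) (Test.integrable_mul hδ hα0 hψ hg)]
  exact (abs_add_le _ _).trans (add_le_add (le_aQ hn hδ hα0 hα1 hf hψ) (le_aQ hn hδ hα0 hα1 hg hψ))

lemma aQ_sum_le {ι : Type*} (hn : 0 < n) (hδ : 0 < δ) (hα0 : 0 < α) (hα1 : α ≤ 1)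
    (S : Finset ι) {f : ι → Rn n → ℝ} (hf : ∀ i ∈ S, LocallyIntegrable (f i) volume) :
    aQ α δ (fun z => ∑ i ∈ S, f i z) Q ≤ ∑ i ∈ S, aQ α δ (f i) Q := by
  refine aQ_le (Finset.sum_nonneg fun i _ => aQ_nonneg (f i)) fun ψ hψ => ?_
  simp only [Finset.mul_sum]
  rw [integral_finsetSum _ fun i hi => Test.integrable_mul hδ hα0 hψ (hf i hi)]
  exact (Finset.abs_sum_le_sum_abs _ _).trans
    (Finset.sum_le_sum fun i hi => le_aQ hn hδ hα0 hα1 (hf i hi) hψ)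

/-- Almost-extremal test functions, up to a factor `2`. -/
lemma exists_test_ge (hδ : 0 < δ) (f : Rn n → ℝ) :
    ∃ ψ ∈ Test n α δ Q, aQ α δ f Q ≤ 2 * |∫ z, ψ z * f z| := by
  rcases (aQ_nonneg (α := α) (δ := δ) (Q := Q) f).eq_or_lt with h | h
  · exact ⟨0, zero_mem_Test hδ, by rw [← h]; positivity⟩
  · have : Nonempty (Test n α δ Q) := ⟨⟨0, zero_mem_Test hδ⟩⟩
    obtain ⟨ψ, hψ⟩ := exists_lt_of_lt_ciSup (show aQ α δ f Q / 2 < aQ α δ f Q by linarith)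
    exact ⟨ψ, ψ.2, by linarith⟩

end

/-! ### Almost orthogonality and the `L²` estimate -/

section

variable {n : ℕ} {δ : ℝ} {α : ℝ} {Q Q' : ℕ × (Fin n → ℤ)} {ψ ψ' : Rn n → ℝ}

/-- The gain `2^{-α}` per generation. -/
def theta (α : ℝ) : ℝ := (1 / 2 : ℝ) ^ α

lemma theta_nonneg (α : ℝ) : 0 ≤ theta α := by unfold theta; positivity

lemma theta_lt_one (hα0 : 0 < α) : theta α < 1 :=
  Real.rpow_lt_one (by norm_num) (by norm_num) hα0

lemma scale_ratio_le (hδ : 0 < δ) (hα1 : α ≤ 1) {K : ℝ} (hK : 1 ≤ K) {i j : ℕ}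
    (hij : i ≤ j) : (K * side δ i / side δ j) ^ α ≤ K * theta α ^ (j - i) := by
  have hs := side_pos hδ i
  obtain ⟨k, rfl⟩ := Nat.exists_eq_add_of_le hij
  have e : K * side δ i / side δ (i + k) = K * (1 / 2 : ℝ) ^ k := by
    rw [side_add, one_div, inv_pow]; field_simp
  rw [e, Real.mul_rpow (by linarith) (by positivity), add_tsub_cancel_left, theta,
    ← Real.rpow_natCast, ← Real.rpow_natCast, ← Real.rpow_mul (by norm_num),
    ← Real.rpow_mul (by norm_num), mul_comm (k : ℝ) α]
  refine mul_le_mul_of_nonneg_right ?_ (by positivity)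
  calc K ^ α ≤ K ^ (1:ℝ) := Real.rpow_le_rpow_of_exponent_le hK hα1
    _ = K := Real.rpow_one _

/-- The bound for the `L¹` norm of a test function. -/
def testL1 (n : ℕ) : ℝ := supC n * (dil n ^ n * unitVol n)

lemma testL1_pos (n : ℕ) : 0 < testL1 n := by
  have := supC_pos n; have := dil_pos n; have := unitVol_pos n
  unfold testL1; positivity

lemma volume_bigBall (hδ : 0 < δ) (Q : ℕ × (Fin n → ℤ)) :
    volume (bigBall δ Q) = ENNReal.ofReal (side δ Q.1 ^ n * (dil n ^ n * unitVol n)) := by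
  have := side_pos hδ Q.1; have := dil_pos n
  rw [bigBall, volume_closedBall_eq _ (by positivity), mul_pow]
  congr 1; ring

lemma Test.integral_abs_le (hn : 0 < n) (hδ : 0 < δ) (hα0 : 0 < α) (hα1 : α ≤ 1)
    (hψ : ψ ∈ Test n α δ Q) : ∫ z, |ψ z| ≤ testL1 n := by
  have hs := side_pos hδ Q.1
  have hd := dil_pos n; have hv := unitVol_pos n
  have h1 : ∫ z, |ψ z| ≤ ∫ z, (bigBall δ Q).indicator
      (fun _ => (side δ Q.1 ^ n)⁻¹ * supC n) z := by
    refine integral_mono (Test.integrable hδ hα0 hψ).abs ?_ fun z => ?_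
    · exact (integrable_indicator_iff (measurableSet_bigBall δ Q)).2
        (integrableOn_const (by rw [volume_bigBall hδ]; exact ENNReal.ofReal_ne_top))
    · simp only [indicator]
      split_ifs with h
      · exact Test.abs_le hn hδ hα1 hψ z
      · rw [hψ.1 z h]; simp
  refine h1.trans (le_of_eq ?_)
  rw [integral_indicator (measurableSet_bigBall δ Q), setIntegral_const, measureReal_def,
    volume_bigBall hδ, ENNReal.toReal_ofReal (by positivity), smul_eq_mul, testL1]
  field_simp

lemma kernel_le_of_le (hn : 0 < n) (hδ : 0 < δ) (hα0 : 0 < α) (hα1 : α ≤ 1)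
    (hψ : ψ ∈ Test n α δ Q) (hψ' : ψ' ∈ Test n α δ Q') (h : Q.1 ≤ Q'.1) :
    |∫ z, ψ' z * ψ z| ≤ (side δ Q'.1 ^ n)⁻¹ * (dil n * testL1 n * theta α ^ (Q'.1 - Q.1)) := by
  have hs' := side_pos hδ Q'.1
  have h1 := Test.abs_integral_le_of_cancel hδ hα0 hψ' (Test.integrable hδ hα0 hψ) hψ.2.1
    (p := corner δ Q) (ρ := dil n * side δ Q.1) fun z hz =>
      hψ.1 z fun hz' => absurd (mem_closedBall.1 hz') (not_le.2 hz)
  have h2 := scale_ratio_le (α := α) hδ hα1 (by linarith [dil_ge_two n] : 1 ≤ dil n) h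
  have h3 := Test.integral_abs_le hn hδ hα0 hα1 hψ
  have := theta_nonneg α; have := dil_pos n; have := testL1_pos n
  calc _ ≤ _ := h1
    _ ≤ (side δ Q'.1 ^ n)⁻¹ * (dil n * theta α ^ (Q'.1 - Q.1)) * testL1 n := by
        gcongr
    _ = _ := by ring

/-- Two test functions are almost orthogonal when their cubes have different sizes. -/
lemma kernel_le (hn : 0 < n) (hδ : 0 < δ) (hα0 : 0 < α) (hα1 : α ≤ 1)
    (hψ : ψ ∈ Test n α δ Q) (hψ' : ψ' ∈ Test n α δ Q') :
    |∫ z, ψ z * ψ' z| ≤ (side δ (max Q.1 Q'.1) ^ n)⁻¹ *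
      (dil n * testL1 n * theta α ^ ((Q'.1 - Q.1) + (Q.1 - Q'.1))) := by
  rcases le_total Q.1 Q'.1 with h | h
  · rw [max_eq_right h, Nat.sub_eq_zero_of_le h, add_zero]
    simpa only [mul_comm (ψ' _)] using kernel_le_of_le hn hδ hα0 hα1 hψ hψ' h
  · rw [max_eq_left h, Nat.sub_eq_zero_of_le h, zero_add]
    exact kernel_le_of_le hn hδ hα0 hα1 hψ' hψ h

lemma kernel_eq_zero (hδ : 0 < δ) (hψ : ψ ∈ Test n α δ Q) (hψ' : ψ' ∈ Test n α δ Q')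
    (h : 2 * dil n * side δ (max Q.1 Q'.1) < dist (corner δ Q') (corner δ Q)) :
    ∫ z, ψ z * ψ' z = 0 := by
  refine Test.integral_eq_zero_of_far hψ (p := corner δ Q') (ρ := dil n * side δ Q'.1)
    (fun z hz => hψ'.1 z fun hz' => absurd (mem_closedBall.1 hz') (not_le.2 hz)) ?_
  rw [dist_comm]
  have h1 := mul_le_mul_of_nonneg_left (side_mono hδ (le_max_left Q.1 Q'.1)) (dil_pos n).le
  have h2 := mul_le_mul_of_nonneg_left (side_mono hδ (le_max_right Q.1 Q'.1)) (dil_pos n).le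
  linarith

/-- The bound for the row sums of the Gram matrix of a family of test functions. -/
def rowC (n : ℕ) (α : ℝ) : ℝ := 2 * (dil n * testL1 n * (6 * dil n) ^ n) / (1 - theta α)

lemma rowC_pos (n : ℕ) (hα0 : 0 < α) : 0 < rowC n α := by
  have := dil_pos n; have := testL1_pos n
  have : 0 < 1 - theta α := by linarith [theta_lt_one hα0]
  unfold rowC; positivity

/-- Schur's test: the Gram matrix of test functions has bounded weighted row sums. -/
lemma row_sum_le (hn : 0 < n) (hδ : 0 < δ) (hα0 : 0 < α) (hα1 : α ≤ 1)
    (Ψ : ℕ × (Fin n → ℤ) → Rn n → ℝ) (hΨ : ∀ Q, Ψ Q ∈ Test n α δ Q)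
    (Q : ℕ × (Fin n → ℤ)) (F : Finset (ℕ × (Fin n → ℤ))) :
    ∑ Q' ∈ F, side δ Q'.1 ^ n * |∫ z, Ψ Q z * Ψ Q' z| ≤ rowC n α := by
  have hd := dil_pos n; have ht := testL1_pos n; have hθ := theta_nonneg α
  refine sum_le_of_levels (fun Q' => side δ Q'.1 ^ n * |∫ z, Ψ Q z * Ψ Q' z|)
    (fun Q' => by have := side_pos hδ Q'.1; positivity)
    (fun j => dil n * testL1 n * (6 * dil n) ^ n * theta α ^ ((j - Q.1) + (Q.1 - j))) _
    ?_ (sum_two_sided_geom_le hθ (theta_lt_one hα0) (by positivity) Q.1) F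
  intro j M
  have hs := side_pos hδ j
  have hS := side_pos hδ (max Q.1 j)
  have hle := side_mono hδ (le_max_right Q.1 j)
  refine (level_sum_le hδ j M (corner δ Q) (ρ := 2 * dil n * side δ (max Q.1 j))
    (K := side δ j ^ n * ((side δ (max Q.1 j) ^ n)⁻¹ *
      (dil n * testL1 n * theta α ^ ((j - Q.1) + (Q.1 - j)))))
    (by positivity) ?_ _ ?_ ?_).trans (le_of_eq ?_)
  · nlinarith [dil_ge_two n]
  · intro m
    exact mul_le_mul_of_nonneg_left (kernel_le hn hδ hα0 hα1 (hΨ Q) (hΨ (j, m))) (by positivity)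
  · intro m hm
    simp only
    rw [kernel_eq_zero hδ (hΨ Q) (hΨ (j, m)) hm, abs_zero, mul_zero]
  · have e : 3 * (2 * dil n * side δ (max Q.1 j)) / side δ j
        = 6 * dil n * (side δ (max Q.1 j) / side δ j) := by ring
    rw [e, mul_pow, div_pow]
    field_simp

/-- The `L²` estimate for a finite family of test functions, by almost orthogonality. -/
lemma sum_sq_le (hn : 0 < n) (hδ : 0 < δ) (hα0 : 0 < α) (hα1 : α ≤ 1)
    (Ψ : ℕ × (Fin n → ℤ) → Rn n → ℝ) (hΨ : ∀ Q, Ψ Q ∈ Test n α δ Q)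
    (F : Finset (ℕ × (Fin n → ℤ))) {g : Rn n → ℝ} (hg : Integrable g)
    (hg2 : Integrable fun z => g z ^ 2) :
    ∑ Q ∈ F, side δ Q.1 ^ n * (∫ z, Ψ Q z * g z) ^ 2 ≤ rowC n α * ∫ z, g z ^ 2 := by
  set c : ℕ × (Fin n → ℤ) → ℝ := fun Q => ∫ z, Ψ Q z * g z with hc
  set w : ℕ × (Fin n → ℤ) → ℝ := fun Q => side δ Q.1 ^ n with hw
  have hw0 : ∀ Q, 0 < w Q := fun Q => pow_pos (side_pos hδ Q.1) n
  set T := ∑ Q ∈ F, w Q * c Q ^ 2 with hT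
  set h : Rn n → ℝ := fun z => ∑ Q ∈ F, w Q * c Q * Ψ Q z with hh
  have hR := rowC_pos n hα0
  have igh : ∀ Q, Integrable fun z => Ψ Q z * g z := fun Q =>
    Test.integrable_mul hδ hα0 (hΨ Q) hg.locallyIntegrable
  have ikk : ∀ Q Q', Integrable fun z => Ψ Q z * Ψ Q' z := fun Q Q' =>
    Test.integrable_mul hδ hα0 (hΨ Q) (Test.integrable hδ hα0 (hΨ Q')).locallyIntegrable
  have egh : ∀ z, g z * h z = ∑ Q ∈ F, w Q * c Q * (Ψ Q z * g z) := by
    intro z; simp only [hh, Finset.mul_sum]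
    exact Finset.sum_congr rfl fun _ _ => by ring
  have ehh : ∀ z, h z ^ 2 = ∑ Q ∈ F, ∑ Q' ∈ F, w Q * c Q * (w Q' * c Q') * (Ψ Q z * Ψ Q' z) := by
    intro z; simp only [hh, sq, Finset.sum_mul_sum]
    exact Finset.sum_congr rfl fun _ _ => Finset.sum_congr rfl fun _ _ => by ring
  have Igh : Integrable fun z => g z * h z := by
    simp only [egh]
    exact integrable_finsetSum _ fun Q _ => (igh Q).const_mul _
  have Ihh : Integrable fun z => h z ^ 2 := by
    simp only [ehh]
    exact integrable_finsetSum _ fun Q _ => integrable_finsetSum _ fun Q' _ =>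
      (ikk Q Q').const_mul _
  have vgh : ∫ z, g z * h z = T := by
    simp only [egh]
    rw [integral_finsetSum _ fun Q _ => (igh Q).const_mul _]
    refine Finset.sum_congr rfl fun Q _ => ?_
    rw [integral_const_mul]; simp only [hc]; ring
  have vhh : ∫ z, h z ^ 2 ≤ rowC n α * T := by
    simp only [ehh]
    rw [integral_finsetSum _ fun Q _ => integrable_finsetSum _ fun Q' _ =>
      (ikk Q Q').const_mul _]
    have e1 : ∀ Q ∈ F, (∫ z, ∑ Q' ∈ F, w Q * c Q * (w Q' * c Q') * (Ψ Q z * Ψ Q' z))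
        ≤ ∑ Q' ∈ F, (w Q * c Q ^ 2 * (w Q' * |∫ z, Ψ Q z * Ψ Q' z|) / 2
          + w Q' * c Q' ^ 2 * (w Q * |∫ z, Ψ Q' z * Ψ Q z|) / 2) := by
      intro Q _
      rw [integral_finsetSum _ fun Q' _ => (ikk Q Q').const_mul _]
      refine Finset.sum_le_sum fun Q' _ => ?_
      rw [integral_const_mul]
      have e : ∫ z, Ψ Q' z * Ψ Q z = ∫ z, Ψ Q z * Ψ Q' z := by simp only [mul_comm]
      rw [e]
      set I := ∫ z, Ψ Q z * Ψ Q' z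
      have h1 : c Q * c Q' * I ≤ (c Q ^ 2 + c Q' ^ 2) / 2 * |I| := by
        refine (le_abs_self _).trans ?_
        rw [abs_mul]
        refine mul_le_mul_of_nonneg_right ?_ (abs_nonneg _)
        rw [abs_le]; constructor <;> nlinarith [sq_nonneg (c Q + c Q'), sq_nonneg (c Q - c Q')]
      have h2 := mul_le_mul_of_nonneg_left h1 (mul_pos (hw0 Q) (hw0 Q')).le
      linarith
    refine (Finset.sum_le_sum e1).trans ?_
    simp only [Finset.sum_add_distrib]
    have e2 : ∑ Q ∈ F, ∑ Q' ∈ F, w Q * c Q ^ 2 * (w Q' * |∫ z, Ψ Q z * Ψ Q' z|) / 2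
        ≤ rowC n α * T / 2 := by
      rw [hT, Finset.mul_sum, Finset.sum_div]
      refine Finset.sum_le_sum fun Q _ => ?_
      rw [← Finset.sum_div, ← Finset.mul_sum]
      have := mul_le_mul_of_nonneg_left (row_sum_le hn hδ hα0 hα1 Ψ hΨ Q F)
        (mul_nonneg (hw0 Q).le (sq_nonneg (c Q)))
      linarith
    have e3 := e2
    rw [Finset.sum_comm] at e3
    rw [Finset.sum_comm] at e3
    rw [Finset.sum_comm (f := fun Q Q' => w Q' * c Q' ^ 2 * (w Q * |∫ z, Ψ Q' z * Ψ Q z|) / 2)]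
    linarith
  -- `0 ≤ ∫ (g - h / C)²` with `C` the row sum bound
  have key : 0 ≤ ∫ z, (g z - (rowC n α)⁻¹ * h z) ^ 2 := integral_nonneg fun z => sq_nonneg _
  have e4 : ∫ z, (g z - (rowC n α)⁻¹ * h z) ^ 2
      = (∫ z, g z ^ 2) - 2 * (rowC n α)⁻¹ * T + (rowC n α)⁻¹ ^ 2 * ∫ z, h z ^ 2 := by
    have I2 : Integrable fun z => g z ^ 2 - 2 * (rowC n α)⁻¹ * (g z * h z) :=
      hg2.sub (Igh.const_mul _)
    rw [← vgh, ← integral_const_mul, ← integral_const_mul, ← integral_sub hg2 (Igh.const_mul _),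
      ← integral_add I2 (Ihh.const_mul _)]
    congr 1; funext z; ring
  rw [e4] at key
  have h5 : (rowC n α)⁻¹ ^ 2 * ∫ z, h z ^ 2 ≤ (rowC n α)⁻¹ * T := by
    have := mul_le_mul_of_nonneg_left vhh (by positivity : 0 ≤ (rowC n α)⁻¹ ^ 2)
    refine this.trans (le_of_eq ?_)
    field_simp
  have h6 : (rowC n α)⁻¹ * T ≤ ∫ z, g z ^ 2 := by linarith
  rwa [inv_mul_le_iff₀ hR] at h6

/-- The `L²` bound for the discrete square function. -/
lemma tsum_sq_le (hn : 0 < n) (hδ : 0 < δ) (hα0 : 0 < α) (hα1 : α ≤ 1)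
    {g : Rn n → ℝ} (hg : Integrable g) (hg2 : Integrable fun z => g z ^ 2) :
    ∑' Q : ℕ × (Fin n → ℤ), ENNReal.ofReal (aQ α δ g Q ^ 2) * volume (bigBall δ Q)
      ≤ ENNReal.ofReal (4 * rowC n α * (dil n ^ n * unitVol n) * ∫ z, g z ^ 2) := by
  have hd := dil_pos n; have hv := unitVol_pos n
  choose Ψ hΨ hΨ2 using fun Q => exists_test_ge (α := α) (Q := Q) hδ g
  have e : ∀ Q : ℕ × (Fin n → ℤ), ENNReal.ofReal (aQ α δ g Q ^ 2) * volume (bigBall δ Q)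
      = ENNReal.ofReal (aQ α δ g Q ^ 2 * (side δ Q.1 ^ n * (dil n ^ n * unitVol n))) := by
    intro Q
    rw [volume_bigBall hδ, ENNReal.ofReal_mul (sq_nonneg _)]
  simp only [e]
  refine tsum_le_of_sum_ofReal _ (fun Q => by have := side_pos hδ Q.1; positivity) _ fun F => ?_
  have h1 : ∀ Q ∈ F, aQ α δ g Q ^ 2 * (side δ Q.1 ^ n * (dil n ^ n * unitVol n))
      ≤ 4 * (dil n ^ n * unitVol n) * (side δ Q.1 ^ n * (∫ z, Ψ Q z * g z) ^ 2) := by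
    intro Q _
    have := side_pos hδ Q.1
    have h2 : aQ α δ g Q ^ 2 ≤ 4 * (∫ z, Ψ Q z * g z) ^ 2 := by
      have := pow_le_pow_left₀ (aQ_nonneg g) (hΨ2 Q) 2
      rw [mul_pow, sq_abs] at this; linarith
    have h3 := mul_le_mul_of_nonneg_right h2
      (by positivity : 0 ≤ side δ Q.1 ^ n * (dil n ^ n * unitVol n))
    linarith
  refine (Finset.sum_le_sum h1).trans ?_
  rw [← Finset.mul_sum]
  have := mul_le_mul_of_nonneg_left (sum_sq_le hn hδ hα0 hα1 Ψ hΨ F hg hg2)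
    (by positivity : 0 ≤ 4 * (dil n ^ n * unitVol n))
  linarith

end

/-! ### The bad part of a Calderón–Zygmund decomposition -/

section

variable {n : ℕ} {δ : ℝ} {α : ℝ} {Q P : ℕ × (Fin n → ℤ)}

/-- The constant in the `L¹` estimate for a mean-zero function on a dyadic cube. -/
def badC (n : ℕ) (α : ℝ) : ℝ :=
  dil n * (dil n ^ n * unitVol n) * (6 * dil n) ^ n / (1 - theta α)

lemma badC_pos (n : ℕ) (hα0 : 0 < α) : 0 < badC n α := by
  have := dil_pos n; have := unitVol_pos n
  have : 0 < 1 - theta α := by linarith [theta_lt_one hα0]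
  unfold badC; positivity

lemma far_of_cube_support (hδ : 0 < δ) {u : Rn n → ℝ} (hsupp : ∀ z, z ∉ cube δ P → u z = 0)
    (z : Rn n) (hz : dil n * side δ P.1 < dist z (corner δ P)) : u z = 0 := by
  refine hsupp z fun h => ?_
  have h1 := dist_corner_le hδ h
  have h2 := mul_le_mul_of_nonneg_right (le_dil n) (side_pos hδ P.1).le
  linarith

lemma aQ_eq_zero_of_far (hδ : 0 < δ) {u : Rn n → ℝ} (hsupp : ∀ z, z ∉ cube δ P → u z = 0)
    (hfar : dil n * side δ Q.1 + dil n * side δ P.1 < dist (corner δ Q) (corner δ P)) :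
    aQ α δ u Q = 0 := by
  refine le_antisymm (aQ_le le_rfl fun ψ hψ => ?_) (aQ_nonneg u)
  rw [Test.integral_eq_zero_of_far hψ (far_of_cube_support hδ hsupp) hfar, abs_zero]

/-- Cubes smaller than `P` see a function living on `P` only near `P`. -/
lemma aQ_eq_zero_of_small (hδ : 0 < δ) {u : Rn n → ℝ} (hsupp : ∀ z, z ∉ cube δ P → u z = 0)
    (hlt : Q.1 < P.1) {x : Rn n} (hx : x ∈ bigBall δ Q)
    (hxP : x ∉ closedBall (corner δ P) (3 * dil n * side δ P.1)) : aQ α δ u Q = 0 := by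
  refine aQ_eq_zero_of_far hδ hsupp ?_
  have h1 := mem_closedBall.1 hx
  rw [mem_closedBall, not_le] at hxP
  have h2 := dist_triangle x (corner δ Q) (corner δ P)
  have h3 := mul_le_mul_of_nonneg_left (side_mono hδ hlt.le) (dil_pos n).le
  linarith

/-- Cubes at least as large as `P` see a mean-zero function on `P` summably in `L¹`. -/
lemma tsum_bad_le (hδ : 0 < δ) (hα0 : 0 < α) (hα1 : α ≤ 1) {u : Rn n → ℝ} (hu : Integrable u)
    (hu0 : ∫ z, u z = 0) (hsupp : ∀ z, z ∉ cube δ P → u z = 0) :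
    ∑' Q : ℕ × (Fin n → ℤ), (if Q.1 < P.1 then 0 else ENNReal.ofReal (aQ α δ u Q)) *
      volume (bigBall δ Q) ≤ ENNReal.ofReal (badC n α * ∫ z, |u z|) := by
  have hd := dil_pos n; have hv := unitVol_pos n; have hθ := theta_nonneg α
  have hI : 0 ≤ ∫ z, |u z| := integral_nonneg fun _ => abs_nonneg _
  have e : ∀ Q : ℕ × (Fin n → ℤ), (if Q.1 < P.1 then 0 else ENNReal.ofReal (aQ α δ u Q)) *
      volume (bigBall δ Q) = ENNReal.ofReal (if Q.1 < P.1 then 0 else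
        aQ α δ u Q * (side δ Q.1 ^ n * (dil n ^ n * unitVol n))) := by
    intro Q
    split_ifs
    · simp
    · rw [volume_bigBall hδ, ENNReal.ofReal_mul (aQ_nonneg u)]
  simp only [e]
  have hnn : ∀ Q : ℕ × (Fin n → ℤ), 0 ≤ (if Q.1 < P.1 then 0 else
        aQ α δ u Q * (side δ Q.1 ^ n * (dil n ^ n * unitVol n))) := by
    intro Q
    have := side_pos hδ Q.1; have := aQ_nonneg (α := α) (δ := δ) (Q := Q) u
    split_ifs <;> positivity
  refine tsum_le_of_sum_ofReal _ hnn _ fun F => ?_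
  have hbad : badC n α * ∫ z, |u z|
      = (dil n * (dil n ^ n * unitVol n) * (6 * dil n) ^ n * ∫ z, |u z|) / (1 - theta α) := by
    unfold badC; ring
  rw [hbad]
  refine sum_le_of_levels _ hnn _ _ (fun j M => ?_)
    (sum_tail_geom_le hθ (theta_lt_one hα0)
      (K := dil n * (dil n ^ n * unitVol n) * (6 * dil n) ^ n * ∫ z, |u z|) (by positivity) P.1) F
  by_cases hj : j < P.1
  · simp [hj]
  simp only [hj, if_false]
  rw [not_lt] at hj
  have hs := side_pos hδ j
  have hle := side_mono hδ hj
  refine (level_sum_le hδ j M (corner δ P) (ρ := 2 * dil n * side δ j)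
    (K := ((side δ j ^ n)⁻¹ * (dil n * theta α ^ (j - P.1)) * ∫ z, |u z|) *
      (side δ j ^ n * (dil n ^ n * unitVol n))) (by positivity) ?_ _ ?_ ?_).trans (le_of_eq ?_)
  · nlinarith [dil_ge_two n]
  · intro m
    refine mul_le_mul_of_nonneg_right (aQ_le (by positivity) fun ψ hψ => ?_) (by positivity)
    refine (Test.abs_integral_le_of_cancel hδ hα0 hψ hu hu0 (far_of_cube_support hδ hsupp)).trans ?_
    have := scale_ratio_le (α := α) hδ hα1 (by linarith [dil_ge_two n] : 1 ≤ dil n) hj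
    gcongr
  · intro m hm
    rw [aQ_eq_zero_of_far hδ hsupp, zero_mul]
    have := mul_le_mul_of_nonneg_left hle hd.le
    linarith
  · have e : 3 * (2 * dil n * side δ j) / side δ j = 6 * dil n := by field_simp; ring
    rw [e]
    field_simp

/-! ### Stopping cubes -/

/-- Dyadic stopping at height `lam`.  All generations are bounded below by the finest mesh, so that
generation `0` cubes are kept when no ancestor has a large average, and the stopping family is
finite. -/
lemma exists_stopping (hn : 0 < n) (hδ : 0 < δ) {f : Rn n → ℝ} (hf : Integrable f) {K : ℝ}
    (hK : ∀ z, K < ‖z‖ → f z = 0) {lam : ℝ} (hlam : 0 < lam) :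
    ∃ S : Finset (ℕ × (Fin n → ℤ)),
      (∀ P ∈ S, ∀ P' ∈ S, ∀ z, z ∈ cube δ P → z ∈ cube δ P' → P = P') ∧
      (∀ z, f z ≠ 0 → ∃ P ∈ S, z ∈ cube δ P) ∧
      (∀ P ∈ S, ∫ z in cube δ P, |f z| ≤ 2 ^ n * lam * side δ P.1 ^ n) ∧
      (∀ P ∈ S, 0 < P.1 → lam * side δ P.1 ^ n < ∫ z in cube δ P, |f z|) := by
  classical
  set E : ℕ × (Fin n → ℤ) → ℝ := fun P => ∫ z in cube δ P, |f z| with hE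
  set Bad : ℕ × (Fin n → ℤ) → Prop := fun P => lam * side δ P.1 ^ n < E P with hBad
  have hEle : ∀ P, E P ≤ ∫ z, |f z| := fun P =>
    setIntegral_le_integral hf.abs (Filter.Eventually.of_forall fun _ => abs_nonneg _)
  obtain ⟨J, hJ⟩ : ∃ J : ℕ, ∀ j, J ≤ j → ∀ m, ¬ Bad (j, m) := by
    obtain ⟨J, hJ⟩ := pow_unbounded_of_one_lt (max 1 ((∫ z, |f z|) / lam) / δ)
      (by norm_num : (1:ℝ) < 2)
    refine ⟨J, fun j hj m hb => ?_⟩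
    rw [div_lt_iff₀ hδ, mul_comm] at hJ
    have h1 : max 1 ((∫ z, |f z|) / lam) < side δ j := lt_of_lt_of_le hJ (side_mono hδ hj)
    have h2 := (le_max_left _ _).trans h1.le
    have h3 := (le_max_right _ _).trans h1.le
    rw [div_le_iff₀ hlam] at h3
    have h4 : side δ j ≤ side δ j ^ n := le_self_pow₀ h2 hn.ne'
    have h5 : lam * side δ j ^ n < E (j, m) := hb
    nlinarith [hEle (j, m)]
  set τ : Rn n → ℕ := fun x => Nat.findGreatest (fun j => Bad (j, cellIdx δ j x)) J with hτ
  set T : Rn n → ℕ × (Fin n → ℤ) := fun x => (τ x, cellIdx δ (τ x) x) with hT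
  have hτJ : ∀ x, τ x ≤ J := fun x => Nat.findGreatest_le J
  have hτbad : ∀ x, 0 < τ x → Bad (T x) := fun x hx =>
    Nat.findGreatest_of_ne_zero (P := fun j => Bad (j, cellIdx δ j x)) rfl hx.ne'
  have hτle : ∀ x j, j ≤ J → Bad (j, cellIdx δ j x) → j ≤ τ x := fun x j hj hb =>
    Nat.le_findGreatest hj hb
  have hfib : ∀ x y, y ∈ cube δ (T x) → T y = T x := by
    intro x y hy
    have hc : ∀ j, τ x ≤ j → cellIdx δ j y = cellIdx δ j x := fun j hj => cellIdx_congr hj hy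
    have h1 : τ x ≤ τ y := by
      rcases Nat.eq_zero_or_pos (τ x) with h | h
      · rw [h]; exact Nat.zero_le _
      · refine hτle y _ (hτJ x) ?_
        rw [hc _ le_rfl]; exact hτbad x h
    have h2 : τ y ≤ τ x := by
      by_contra hlt
      rw [not_le] at hlt
      have hb : Bad (τ y, cellIdx δ (τ y) y) := hτbad y (by omega)
      rw [hc _ hlt.le] at hb
      exact absurd (hτle x _ (hτJ y) hb) (not_le.2 hlt)
    have h3 : τ y = τ x := le_antisymm h2 h1
    simp only [hT, h3, hc _ le_rfl]
  have hfin : (T '' {z | ‖z‖ ≤ K}).Finite := by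
    have h1 : (cellIdx δ 0 '' {z : Rn n | ‖z‖ ≤ K}).Finite := by
      refine (Set.finite_Icc (fun _ : Fin n => ⌊-K / side δ 0⌋)
        (fun _ => ⌊K / side δ 0⌋)).subset ?_
      rintro _ ⟨z, hz, rfl⟩
      have hs := side_pos hδ 0
      have hzi : ∀ i, |z i| ≤ K := fun i => (PiLp.norm_apply_le z i).trans hz
      constructor <;> intro i <;> refine Int.floor_le_floor ?_ <;>
        refine div_le_div_of_nonneg_right ?_ hs.le <;>
        linarith [abs_le.1 (hzi i)]
    refine (h1.image fun m => T (corner δ (0, m))).subset ?_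
    rintro _ ⟨z, hz, rfl⟩
    refine ⟨cellIdx δ 0 z, ⟨z, hz, rfl⟩, ?_⟩
    have h0 : cellIdx δ 0 (corner δ (0, cellIdx δ 0 z)) = cellIdx δ 0 z := by
      funext i
      have hs := side_pos hδ 0
      simp only [cellIdx, corner]
      rw [mul_div_cancel_left₀ _ hs.ne', Int.floor_intCast]
    exact hfib z _ (cellIdx_congr (Nat.zero_le _) h0)
  refine ⟨hfin.toFinset, ?_, ?_, ?_, ?_⟩
  · intro P hP P' hP' z hz hz'
    obtain ⟨x, -, rfl⟩ := hfin.mem_toFinset.1 hP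
    obtain ⟨x', -, rfl⟩ := hfin.mem_toFinset.1 hP'
    exact (hfib x z hz).symm.trans (hfib x' z hz')
  · intro z hz
    refine ⟨T z, hfin.mem_toFinset.2 ⟨z, ?_, rfl⟩, rfl⟩
    by_contra h
    exact hz (hK z (not_le.1 h))
  · intro P hP
    obtain ⟨x, -, rfl⟩ := hfin.mem_toFinset.1 hP
    have hnb : ¬ Bad (τ x + 1, cellIdx δ (τ x + 1) x) := by
      intro hb
      rcases le_or_gt (τ x + 1) J with h | h
      · exact absurd (hτle x _ h hb) (by omega)
      · exact hJ _ h.le _ hb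
    have h1 : E (T x) ≤ E (τ x + 1, cellIdx δ (τ x + 1) x) :=
      setIntegral_mono_set hf.abs.integrableOn
        (Filter.Eventually.of_forall fun _ => abs_nonneg _)
        (LE.le.eventuallyLE fun z hz => cellIdx_congr (Nat.le_succ _) hz)
    refine h1.trans ((not_lt.1 hnb).trans (le_of_eq ?_))
    simp only [hT, side_add, pow_one, mul_pow]; ring
  · intro P hP hpos
    obtain ⟨x, -, rfl⟩ := hfin.mem_toFinset.1 hP
    exact hτbad x hpos

end

/-! ### Weak type `(1,1)` of the discrete square function -/

section

variable {n : ℕ} {δ : ℝ} {α : ℝ}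

/-- The square of the discrete square function over all cubes of side at least `δ`. -/
def sqFun (α δ : ℝ) (f : Rn n → ℝ) (x : Rn n) : ENNReal :=
  ∑' Q, (bigBall δ Q).indicator (fun _ => ENNReal.ofReal (aQ α δ f Q ^ 2)) x

lemma tsum_sq_le_sq_tsum {ι : Type*} (c : ι → ENNReal) : ∑' i, c i ^ 2 ≤ (∑' i, c i) ^ 2 := by
  rw [sq, ← ENNReal.tsum_mul_right]
  refine ENNReal.tsum_le_tsum fun i => ?_
  rw [sq]
  exact mul_le_mul_right (ENNReal.le_tsum i) _

lemma lintegral_tsum_indicator (δ : ℝ) (c : ℕ × (Fin n → ℤ) → ENNReal) :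
    ∫⁻ x, ∑' Q, (bigBall δ Q).indicator (fun _ => c Q) x = ∑' Q, c Q * volume (bigBall δ Q) := by
  rw [lintegral_tsum fun Q =>
    (measurable_const.indicator (measurableSet_bigBall δ Q)).aemeasurable]
  simp only [lintegral_indicator_const (measurableSet_bigBall δ _)]

lemma measurable_tsum_indicator (δ : ℝ) (c : ℕ × (Fin n → ℤ) → ENNReal) :
    Measurable fun x : Rn n => ∑' Q, (bigBall δ Q).indicator (fun _ => c Q) x :=
  Measurable.tsum fun Q => measurable_const.indicator (measurableSet_bigBall δ Q)

lemma volume_le_of_lintegral_le {h : Rn n → ENNReal} (hm : Measurable h) {a B : ℝ} (ha : 0 < a)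
    (hB : ∫⁻ x, h x ≤ ENNReal.ofReal B) :
    volume {x | ENNReal.ofReal a ≤ h x} ≤ ENNReal.ofReal (B / a) := by
  refine (meas_ge_le_lintegral_div hm.aemeasurable (by simpa using ha)
    ENNReal.ofReal_ne_top).trans ?_
  rw [ENNReal.ofReal_div_of_pos ha]
  exact ENNReal.div_le_div_right hB _

/-- `aQ²` is subadditive up to a factor `2`. -/
lemma ofReal_sq_add_le {a b c : ℝ} (ha : 0 ≤ a) (h : a ≤ b + c) :
    ENNReal.ofReal (a ^ 2) ≤ 2 * ENNReal.ofReal (b ^ 2) + 2 * ENNReal.ofReal (c ^ 2) := by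
  have : (2 : ENNReal) = ENNReal.ofReal 2 := by norm_num
  rw [this, ← ENNReal.ofReal_mul (by norm_num), ← ENNReal.ofReal_mul (by norm_num),
    ← ENNReal.ofReal_add (by positivity) (by positivity)]
  exact ENNReal.ofReal_le_ofReal (by nlinarith [sq_nonneg (b - c)])

/-- The weak type constant. -/
def weakC (n : ℕ) (α : ℝ) : ℝ :=
  (3 * dil n) ^ n * unitVol n + 16 * rowC n α * (dil n ^ n * unitVol n) * 2 ^ n + 4 * badC n α

lemma weakC_pos (n : ℕ) (hα0 : 0 < α) : 0 < weakC n α := by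
  have := dil_pos n; have := unitVol_pos n; have := rowC_pos n hα0; have := badC_pos n hα0
  unfold weakC; positivity

/-- Weak type `(1,1)`, with a bound independent of the finest mesh `δ`. -/
lemma weak_type (hn : 0 < n) (hδ : 0 < δ) (hα0 : 0 < α) (hα1 : α ≤ 1)
    {f : Rn n → ℝ} (hf : Integrable f) {K : ℝ} (hK : ∀ z, K < ‖z‖ → f z = 0)
    {σ : ℝ} (hσ : 0 < σ) :
    volume {x | ENNReal.ofReal (σ ^ 2) < sqFun α δ f x}
      ≤ ENNReal.ofReal (weakC n α * (∫ z, |f z|) / σ) := by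
  classical
  have hd := dil_pos n; have hv := unitVol_pos n; have hrow := rowC_pos n hα0
  obtain ⟨S, hdisj, hcov, hup, hlow⟩ := exists_stopping hn hδ hf hK hσ
  have hmc := fun P : ℕ × (Fin n → ℤ) => measurableSet_cube hδ P
  have hvc : ∀ P : ℕ × (Fin n → ℤ), volume.real (cube δ P) = side δ P.1 ^ n := fun P => by
    have := side_pos hδ P.1
    rw [measureReal_def, volume_cube hδ, ENNReal.toReal_ofReal (by positivity)]
  have hvt : ∀ P : ℕ × (Fin n → ℤ), volume (cube δ P) ≠ ⊤ := fun P => by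
    rw [volume_cube hδ]; exact ENNReal.ofReal_ne_top
  -- at each point at most one cube of the family contributes
  have hsingle : ∀ (z : Rn n) (P : ℕ × (Fin n → ℤ)), P ∈ S → z ∈ cube δ P →
      ∀ h : ℕ × (Fin n → ℤ) → Rn n → ℝ, ∑ P' ∈ S, (cube δ P').indicator (h P') z = h P z := by
    intro z P hP hz h
    rw [Finset.sum_eq_single_of_mem P hP fun P' hP' hne =>
      indicator_of_notMem (fun hz' => hne (hdisj P' hP' P hP z hz' hz)) _, indicator_of_mem hz]
  have hnone : ∀ (z : Rn n), (¬ ∃ P ∈ S, z ∈ cube δ P) →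
      ∀ h : ℕ × (Fin n → ℤ) → Rn n → ℝ, ∑ P' ∈ S, (cube δ P').indicator (h P') z = 0 := by
    intro z hz h
    exact Finset.sum_eq_zero fun P hP => indicator_of_notMem (fun h' => hz ⟨P, hP, h'⟩) _
  set E : ℕ × (Fin n → ℤ) → ℝ := fun P => ∫ z in cube δ P, |f z| with hE
  have hE0 : ∀ P, 0 ≤ E P := fun P => integral_nonneg fun _ => abs_nonneg _
  have hEsum : ∑ P ∈ S, E P ≤ ∫ z, |f z| := by
    have e1 : ∑ P ∈ S, E P = ∫ z, ∑ P ∈ S, (cube δ P).indicator (fun z => |f z|) z := by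
      rw [integral_finsetSum _ fun P _ => hf.abs.indicator (hmc P)]
      exact Finset.sum_congr rfl fun P _ => (integral_indicator (hmc P)).symm
    rw [e1]
    refine integral_mono (integrable_finsetSum _ fun P _ => hf.abs.indicator (hmc P)) hf.abs
      fun z => ?_
    by_cases hz : ∃ P ∈ S, z ∈ cube δ P
    · obtain ⟨P, hP, hz⟩ := hz
      simp only
      rw [hsingle z P hP hz fun _ z => |f z|]
    · simp only
      rw [hnone z hz fun _ z => |f z|]; exact abs_nonneg _
  -- the good part `g` and the bad parts `u P`
  set avg : ℕ × (Fin n → ℤ) → ℝ := fun P => (side δ P.1 ^ n)⁻¹ * ∫ z in cube δ P, f z with havg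
  set g : Rn n → ℝ := fun z => ∑ P ∈ S, (cube δ P).indicator (fun _ => avg P) z with hg
  set u : ℕ × (Fin n → ℤ) → Rn n → ℝ := fun P => (cube δ P).indicator (fun z => f z - avg P)
    with hu
  have havgE : ∀ P, |avg P| * side δ P.1 ^ n ≤ E P := by
    intro P
    have hs := side_pos hδ P.1
    simp only [havg]
    rw [abs_mul, abs_of_pos (by positivity : 0 < (side δ P.1 ^ n)⁻¹), mul_right_comm,
      inv_mul_cancel₀ (by positivity), one_mul]
    exact abs_integral_le_integral_abs
  have havgσ : ∀ P ∈ S, |avg P| ≤ 2 ^ n * σ := by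
    intro P hP
    have hs := side_pos hδ P.1
    exact le_of_mul_le_mul_right ((havgE P).trans (hup P hP)) (by positivity)
  have hgi : Integrable g := integrable_finsetSum _ fun P _ =>
    (integrable_indicator_iff (hmc P)).2 (integrableOn_const (hvt P))
  have hg2 : ∀ z, g z ^ 2 = ∑ P ∈ S, (cube δ P).indicator (fun _ => avg P ^ 2) z := by
    intro z
    by_cases hz : ∃ P ∈ S, z ∈ cube δ P
    · obtain ⟨P, hP, hz⟩ := hz
      simp only [hg]
      rw [hsingle z P hP hz fun P _ => avg P, hsingle z P hP hz fun P _ => avg P ^ 2]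
    · simp only [hg]
      rw [hnone z hz fun P _ => avg P, hnone z hz fun P _ => avg P ^ 2]; simp
  have hI2 : ∀ P ∈ S, Integrable ((cube δ P).indicator (fun _ => avg P ^ 2)) := fun P _ =>
    (integrable_indicator_iff (hmc P)).2 (integrableOn_const (hvt P))
  have hg2i : Integrable fun z => g z ^ 2 := by
    simp only [hg2]; exact integrable_finsetSum _ hI2
  have hg2v : ∫ z, g z ^ 2 ≤ 2 ^ n * σ * ∫ z, |f z| := by
    simp only [hg2]
    rw [integral_finsetSum _ hI2]
    have h1 : ∀ P ∈ S, ∫ z, (cube δ P).indicator (fun _ => avg P ^ 2) z ≤ 2 ^ n * σ * E P := by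
      intro P hP
      have hs := side_pos hδ P.1
      rw [integral_indicator (hmc P), setIntegral_const, hvc, smul_eq_mul, ← sq_abs, sq]
      calc side δ P.1 ^ n * (|avg P| * |avg P|) = |avg P| * (|avg P| * side δ P.1 ^ n) := by ring
        _ ≤ 2 ^ n * σ * E P := mul_le_mul (havgσ P hP) (havgE P) (by positivity) (by positivity)
    refine (Finset.sum_le_sum h1).trans ?_
    rw [← Finset.mul_sum]
    exact mul_le_mul_of_nonneg_left hEsum (by positivity)
  have hconst : ∀ P, IntegrableOn (fun _ : Rn n => avg P) (cube δ P) := fun P =>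
    integrableOn_const (hvt P)
  have hui : ∀ P, Integrable (u P) := fun P =>
    (integrable_indicator_iff (hmc P)).2 (hf.integrableOn.sub (hconst P))
  have hu0 : ∀ P, ∫ z, u P z = 0 := by
    intro P
    have hs := side_pos hδ P.1
    simp only [hu]
    rw [integral_indicator (hmc P), integral_sub hf.integrableOn (hconst P), setIntegral_const,
      hvc, smul_eq_mul]
    simp only [havg]
    rw [mul_inv_cancel_left₀ (by positivity), sub_self]
  have hu1 : ∀ P, ∫ z, |u P z| ≤ 2 * E P := by
    intro P
    have hs := side_pos hδ P.1
    have e1 : (fun z => |u P z|) = (cube δ P).indicator (fun z => |f z - avg P|) := by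
      funext z; simp only [hu, indicator]; split_ifs <;> simp
    rw [e1, integral_indicator (hmc P)]
    have h1 : ∫ z in cube δ P, |f z - avg P| ≤ ∫ z in cube δ P, (|f z| + |avg P|) :=
      integral_mono (hf.integrableOn.sub (hconst P)).abs
        (hf.integrableOn.abs.add (hconst P).abs) fun z => abs_sub _ _
    rw [integral_add hf.integrableOn.abs (hconst P).abs, setIntegral_const, hvc, smul_eq_mul] at h1
    linarith [havgE P]
  have husupp : ∀ P, ∀ z, z ∉ cube δ P → u P z = 0 := fun P z hz => indicator_of_notMem hz _
  have hdec : f = fun z => g z + ∑ P ∈ S, u P z := by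
    funext z
    by_cases hz : ∃ P ∈ S, z ∈ cube δ P
    · obtain ⟨P, hP, hz⟩ := hz
      simp only [hg, hu]
      rw [hsingle z P hP hz fun P _ => avg P, hsingle z P hP hz fun P z => f z - avg P]
      ring
    · simp only [hg, hu]
      rw [hnone z hz fun P _ => avg P, hnone z hz fun P z => f z - avg P, add_zero]
      by_contra h
      exact hz (hcov z h)
  have haQ : ∀ Q, aQ α δ f Q ≤ aQ α δ g Q + ∑ P ∈ S, aQ α δ (u P) Q := by
    intro Q
    conv_lhs => rw [hdec]
    refine (aQ_add_le hn hδ hα0 hα1 hgi.locallyIntegrable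
      (integrable_finsetSum S fun P _ => hui P).locallyIntegrable).trans ?_
    gcongr
    exact aQ_sum_le hn hδ hα0 hα1 S fun P _ => (hui P).locallyIntegrable
  -- the exceptional set, and the `ℓ¹` majorant of the bad part away from it
  set Ω : Set (Rn n) := ⋃ P ∈ S.filter (fun P => 0 < P.1),
    closedBall (corner δ P) (3 * dil n * side δ P.1) with hΩ
  set c : ℕ × (Fin n → ℤ) → ENNReal := fun Q =>
    ∑ P ∈ S, (if Q.1 < P.1 then 0 else ENNReal.ofReal (aQ α δ (u P) Q)) with hc
  set hb : Rn n → ENNReal := fun x => ∑' Q, (bigBall δ Q).indicator (fun _ => c Q) x with hhb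
  have hpt : ∀ x, x ∉ Ω → sqFun α δ f x ≤ 2 * sqFun α δ g x + 2 * hb x ^ 2 := by
    intro x hx
    have h1 : ∀ Q, (bigBall δ Q).indicator (fun _ => ENNReal.ofReal (aQ α δ f Q ^ 2)) x
        ≤ 2 * (bigBall δ Q).indicator (fun _ => ENNReal.ofReal (aQ α δ g Q ^ 2)) x
          + 2 * ((bigBall δ Q).indicator (fun _ => c Q) x) ^ 2 := by
      intro Q
      by_cases hQ : x ∈ bigBall δ Q
      swap
      · simp [hQ]
      simp only [indicator_of_mem hQ]
      have h2 : c Q = ENNReal.ofReal (∑ P ∈ S, aQ α δ (u P) Q) := by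
        rw [ENNReal.ofReal_sum_of_nonneg fun P _ => aQ_nonneg _]
        refine Finset.sum_congr rfl fun P hP => ?_
        split_ifs with hlt
        · rw [aQ_eq_zero_of_small hδ (husupp P) hlt hQ, ENNReal.ofReal_zero]
          intro hxP
          exact hx (mem_iUnion₂.2 ⟨P, Finset.mem_filter.2 ⟨hP, by omega⟩, hxP⟩)
        · rfl
      rw [h2, ← ENNReal.ofReal_pow (Finset.sum_nonneg fun P _ => aQ_nonneg _)]
      exact ofReal_sq_add_le (aQ_nonneg f) (haQ Q)
    calc sqFun α δ f x ≤ ∑' Q, (2 * (bigBall δ Q).indicator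
            (fun _ => ENNReal.ofReal (aQ α δ g Q ^ 2)) x
          + 2 * ((bigBall δ Q).indicator (fun _ => c Q) x) ^ 2) := ENNReal.tsum_le_tsum h1
      _ = 2 * sqFun α δ g x + 2 * ∑' Q, ((bigBall δ Q).indicator (fun _ => c Q) x) ^ 2 := by
          rw [ENNReal.tsum_add, ENNReal.tsum_mul_left, ENNReal.tsum_mul_left]; rfl
      _ ≤ _ := by gcongr; exact tsum_sq_le_sq_tsum _
  have hsub : {x | ENNReal.ofReal (σ ^ 2) < sqFun α δ f x} ⊆
      Ω ∪ ({x | ENNReal.ofReal (σ ^ 2 / 4) ≤ sqFun α δ g x} ∪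
        {x | ENNReal.ofReal (σ / 2) ≤ hb x}) := by
    intro x hx
    by_contra hcon
    simp only [mem_union, not_or, mem_ofPred_eq, not_le] at hcon hx
    obtain ⟨h1, h2, h3⟩ := hcon
    refine absurd ((hpt x h1).trans ?_) (not_le.2 hx)
    have h4 : hb x ^ 2 ≤ ENNReal.ofReal (σ ^ 2 / 4) := by
      refine (pow_le_pow_left₀ zero_le h3.le 2).trans (le_of_eq ?_)
      rw [← ENNReal.ofReal_pow (by positivity)]; congr 1; ring
    calc 2 * sqFun α δ g x + 2 * hb x ^ 2
        ≤ 2 * ENNReal.ofReal (σ ^ 2 / 4) + 2 * ENNReal.ofReal (σ ^ 2 / 4) := by gcongr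
      _ = ENNReal.ofReal (σ ^ 2) := by
        have : (2 : ENNReal) = ENNReal.ofReal 2 := by norm_num
        rw [this, ← ENNReal.ofReal_mul (by norm_num),
          ← ENNReal.ofReal_add (by positivity) (by positivity)]
        congr 1; ring
  have hI0 : 0 ≤ ∫ z, |f z| := integral_nonneg fun _ => abs_nonneg _
  have vΩ : volume Ω ≤ ENNReal.ofReal ((3 * dil n) ^ n * unitVol n * (∫ z, |f z|) / σ) := by
    refine (measure_biUnion_finset_le _ _).trans ?_
    have h1 : ∀ P ∈ S.filter (fun P => 0 < P.1),
        volume (closedBall (corner δ P) (3 * dil n * side δ P.1))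
          ≤ ENNReal.ofReal ((3 * dil n) ^ n * unitVol n / σ * E P) := by
      intro P hP
      obtain ⟨hP, hpos⟩ := Finset.mem_filter.1 hP
      have hs := side_pos hδ P.1
      rw [volume_closedBall_eq _ (by positivity)]
      refine ENNReal.ofReal_le_ofReal ?_
      have h2 : side δ P.1 ^ n ≤ E P / σ := by
        rw [le_div_iff₀ hσ]; linarith [hlow P hP hpos]
      have h3 := mul_le_mul_of_nonneg_left h2 (by positivity : 0 ≤ (3 * dil n) ^ n * unitVol n)
      refine le_trans (le_of_eq ?_) (h3.trans (le_of_eq ?_)) <;> ring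
    refine (Finset.sum_le_sum h1).trans ?_
    rw [← ENNReal.ofReal_sum_of_nonneg fun P _ => mul_nonneg (by positivity) (hE0 P),
      ← Finset.mul_sum]
    refine ENNReal.ofReal_le_ofReal ?_
    have h3 : ∑ P ∈ S.filter (fun P => 0 < P.1), E P ≤ ∫ z, |f z| :=
      (Finset.sum_le_sum_of_subset_of_nonneg (Finset.filter_subset _ _)
        fun P _ _ => hE0 P).trans hEsum
    refine (mul_le_mul_of_nonneg_left h3 (by positivity)).trans (le_of_eq ?_)
    ring
  have vg : volume {x | ENNReal.ofReal (σ ^ 2 / 4) ≤ sqFun α δ g x} ≤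
      ENNReal.ofReal (16 * rowC n α * (dil n ^ n * unitVol n) * 2 ^ n * (∫ z, |f z|) / σ) := by
    have hle : ∫⁻ x, sqFun α δ g x ≤ ENNReal.ofReal
        (4 * rowC n α * (dil n ^ n * unitVol n) * (2 ^ n * σ * ∫ z, |f z|)) := by
      unfold sqFun
      rw [lintegral_tsum_indicator]
      refine (tsum_sq_le hn hδ hα0 hα1 hgi hg2i).trans (ENNReal.ofReal_le_ofReal ?_)
      gcongr
    refine (volume_le_of_lintegral_le (measurable_tsum_indicator δ _) (by positivity) hle).trans
      (le_of_eq ?_)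
    congr 1; field_simp; ring
  have vb : volume {x | ENNReal.ofReal (σ / 2) ≤ hb x} ≤
      ENNReal.ofReal (4 * badC n α * (∫ z, |f z|) / σ) := by
    have hle : ∫⁻ x, hb x ≤ ENNReal.ofReal (2 * badC n α * ∫ z, |f z|) := by
      simp only [hhb]
      rw [lintegral_tsum_indicator]
      simp only [hc, Finset.sum_mul]
      rw [Summable.tsum_finsetSum fun _ _ => ENNReal.summable]
      have h1 : ∀ P ∈ S, ∑' Q : ℕ × (Fin n → ℤ),
          (if Q.1 < P.1 then 0 else ENNReal.ofReal (aQ α δ (u P) Q)) * volume (bigBall δ Q)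
            ≤ ENNReal.ofReal (2 * badC n α * E P) := by
        intro P _
        refine (tsum_bad_le hδ hα0 hα1 (hui P) (hu0 P) (husupp P)).trans
          (ENNReal.ofReal_le_ofReal ?_)
        have := mul_le_mul_of_nonneg_left (hu1 P) (badC_pos n hα0).le
        linarith
      refine (Finset.sum_le_sum h1).trans ?_
      have hbp := badC_pos n hα0
      rw [← ENNReal.ofReal_sum_of_nonneg fun P _ => mul_nonneg (by positivity) (hE0 P),
        ← Finset.mul_sum]
      exact ENNReal.ofReal_le_ofReal (mul_le_mul_of_nonneg_left hEsum (by positivity))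
    refine (volume_le_of_lintegral_le (measurable_tsum_indicator δ _) (by positivity) hle).trans
      (le_of_eq ?_)
    congr 1; field_simp; ring
  refine (measure_mono hsub).trans ((measure_union_le _ _).trans
    ((add_le_add vΩ ((measure_union_le _ _).trans (add_le_add vg vb))).trans (le_of_eq ?_)))
  have hbp := badC_pos n hα0
  rw [← ENNReal.ofReal_add (by positivity) (by positivity),
    ← ENNReal.ofReal_add (by positivity) (by positivity)]
  congr 1; unfold weakC; ring

end

/-! ### Comparison of `S_α` with the discrete square functions -/

section

variable {n : ℕ} {δ : ℝ} {α : ℝ}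

lemma Aalpha_nonneg (f : Rn n → ℝ) (y : Rn n) (t : ℝ) : 0 ≤ Aalpha α f y t :=
  Real.iSup_nonneg fun _ => Real.iSup_nonneg fun _ => abs_nonneg _

/-- The functions `φ_t(y - ·)`, `φ ∈ 𝒞_α`, are test functions for the dyadic cube containing `y`
whose side is comparable to `t`. -/
lemma Calpha.mem_Test (hδ : 0 < δ) (hα0 : 0 < α) {Q : ℕ × (Fin n → ℤ)} {y : Rn n}
    (hy : y ∈ cube δ Q) {t : ℝ} (ht1 : side δ Q.1 ≤ t) (ht2 : t < 2 * side δ Q.1)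
    {φ : Rn n → ℝ} (hφ : φ ∈ Calpha n α) :
    (fun z => (t ^ n)⁻¹ * φ (t⁻¹ • (y - z))) ∈ Test n α δ Q := by
  have hs := side_pos hδ Q.1
  have ht : 0 < t := hs.trans_le ht1
  obtain ⟨h1, h2, h3⟩ := hφ
  refine ⟨fun z hz => ?_, ?_, fun z z' => ?_⟩
  · simp only
    rw [h1, mul_zero]
    rw [norm_smul, Real.norm_of_nonneg (by positivity), inv_mul_eq_div, one_lt_div ht]
    by_contra hcon
    apply hz
    have hd := dist_triangle z y (corner δ Q)
    rw [dist_comm z y, dist_eq_norm y z] at hd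
    have hc := dist_corner_le hδ hy
    have : dil n * side δ Q.1 = n * side δ Q.1 + 2 * side δ Q.1 := by unfold dil; ring
    exact mem_closedBall.2 (by linarith [not_lt.1 hcon])
  · have e : ∫ z, φ (t⁻¹ • (y - z)) = 0 := by
      rw [integral_sub_left_eq_self (fun w => φ (t⁻¹ • w)) volume y,
        Measure.integral_comp_smul, h2, smul_zero]
    simp only
    rw [integral_const_mul, e, mul_zero]
  · have hn : ‖t⁻¹ • (y - z) - t⁻¹ • (y - z')‖ = ‖z - z'‖ / t := by
      rw [← smul_sub, norm_smul, Real.norm_of_nonneg (by positivity), sub_sub_sub_cancel_left,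
        norm_sub_rev, inv_mul_eq_div]
    simp only
    rw [← mul_sub, abs_mul, abs_of_pos (by positivity)]
    have hh := h3 (t⁻¹ • (y - z)) (t⁻¹ • (y - z'))
    rw [hn] at hh
    refine mul_le_mul ?_ (hh.trans ?_) (abs_nonneg _) (by positivity)
    · gcongr
    · refine Real.rpow_le_rpow (by positivity) ?_ hα0.le
      gcongr

lemma Aalpha_le_aQ (hn : 0 < n) (hδ : 0 < δ) (hα0 : 0 < α) (hα1 : α ≤ 1) {f : Rn n → ℝ}
    (hf : LocallyIntegrable f volume) {Q : ℕ × (Fin n → ℤ)} {y : Rn n}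
    (hy : y ∈ cube δ Q) {t : ℝ} (ht1 : side δ Q.1 ≤ t) (ht2 : t < 2 * side δ Q.1) :
    Aalpha α f y t ≤ aQ α δ f Q :=
  Real.iSup_le (fun _ => Real.iSup_le (fun hφ =>
    le_aQ hn hδ hα0 hα1 hf (Calpha.mem_Test hδ hα0 hy ht1 ht2 hφ)) (aQ_nonneg f)) (aQ_nonneg f)

/-- The square of the intrinsic square function over the cone truncated at height `δ`. -/
def truncSq (α δ : ℝ) (f : Rn n → ℝ) (x : Rn n) : ENNReal :=
  ∫⁻ p in {p : Rn n × ℝ | δ ≤ p.2 ∧ dist x p.1 < p.2},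
    ENNReal.ofReal (Aalpha α f p.1 p.2 ^ 2 / p.2 ^ (n + 1))

/-- The cone is covered by the products of a dyadic cube `Q` and the interval `[ℓ(Q), 2ℓ(Q))`. -/
lemma truncSq_le_sqFun (hn : 0 < n) (hδ : 0 < δ) (hα0 : 0 < α) (hα1 : α ≤ 1) {f : Rn n → ℝ}
    (hf : LocallyIntegrable f volume) (x : Rn n) : truncSq α δ f x ≤ sqFun α δ f x := by
  set T : Set (Rn n × ℝ) := {p | δ ≤ p.2 ∧ dist x p.1 < p.2} with hT
  set g : Rn n × ℝ → ENNReal :=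
    fun p => ENNReal.ofReal (Aalpha α f p.1 p.2 ^ 2 / p.2 ^ (n + 1)) with hg
  set B : ℕ × (Fin n → ℤ) → Set (Rn n × ℝ) :=
    fun Q => cube δ Q ×ˢ Ico (side δ Q.1) (2 * side δ Q.1) with hB
  have hcov : T ⊆ ⋃ Q, T ∩ B Q := by
    intro p hp
    obtain ⟨j, hj1, hj2⟩ := exists_nat_pow_near (x := p.2 / δ) (y := 2)
      ((one_le_div hδ).2 hp.1) (by norm_num)
    rw [le_div_iff₀ hδ] at hj1
    rw [div_lt_iff₀ hδ, pow_succ] at hj2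
    refine mem_iUnion.2 ⟨(j, cellIdx δ j p.1), hp, ?_⟩
    refine ⟨rfl, ?_, ?_⟩ <;> simp only [side] <;> linarith
  have hpiece : ∀ Q, ∫⁻ p in T ∩ B Q, g p ≤
      (bigBall δ Q).indicator (fun _ => ENNReal.ofReal (aQ α δ f Q ^ 2)) x := by
    intro Q
    have hs := side_pos hδ Q.1
    by_cases hx : x ∈ bigBall δ Q
    · rw [indicator_of_mem hx]
      have hm : MeasurableSet (B Q) := (measurableSet_cube hδ Q).prod measurableSet_Ico
      have hbd : ∀ p ∈ B Q, g p ≤ ENNReal.ofReal (aQ α δ f Q ^ 2 / side δ Q.1 ^ (n + 1)) := by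
        rintro p ⟨hp1, hp2, hp3⟩
        have h1 := Aalpha_le_aQ hn hδ hα0 hα1 hf hp1 hp2 hp3
        have h0 := Aalpha_nonneg (α := α) f p.1 p.2
        have ha := aQ_nonneg (α := α) (δ := δ) (Q := Q) f
        refine ENNReal.ofReal_le_ofReal ?_
        gcongr
      calc ∫⁻ p in T ∩ B Q, g p ≤ ∫⁻ p in B Q, g p := lintegral_mono_set inter_subset_right
        _ ≤ ∫⁻ _ in B Q, ENNReal.ofReal (aQ α δ f Q ^ 2 / side δ Q.1 ^ (n + 1)) :=
            setLIntegral_mono' hm hbd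
        _ = ENNReal.ofReal (aQ α δ f Q ^ 2 / side δ Q.1 ^ (n + 1)) *
            ENNReal.ofReal (side δ Q.1 ^ n * side δ Q.1) := by
            rw [setLIntegral_const, hB, Measure.volume_eq_prod, Measure.prod_prod,
              volume_cube hδ, Real.volume_Ico, ← ENNReal.ofReal_mul (by positivity)]
            congr 3; ring
        _ = _ := by
            rw [← ENNReal.ofReal_mul (by positivity)]
            congr 1
            field_simp
            ring
    · rw [indicator_of_notMem hx]
      have : T ∩ B Q = ∅ := by
        refine eq_empty_of_forall_notMem ?_
        rintro p ⟨⟨_, hp2⟩, hp3, _, hp4⟩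
        apply hx
        have hd := dist_triangle x p.1 (corner δ Q)
        have hc := dist_corner_le hδ hp3
        have : dil n * side δ Q.1 = n * side δ Q.1 + 2 * side δ Q.1 := by unfold dil; ring
        exact mem_closedBall.2 (by linarith)
      rw [this]; simp
  calc truncSq α δ f x = ∫⁻ p in T, g p := rfl
    _ ≤ ∫⁻ p in ⋃ Q, T ∩ B Q, g p := lintegral_mono_set hcov
    _ ≤ ∑' Q, ∫⁻ p in T ∩ B Q, g p := lintegral_iUnion_le _ _
    _ ≤ _ := ENNReal.tsum_le_tsum hpiece

lemma truncSq_anti {δ' : ℝ} (h : δ ≤ δ') (f : Rn n → ℝ) (x : Rn n) :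
    truncSq α δ' f x ≤ truncSq α δ f x :=
  lintegral_mono_set fun _ hp => ⟨h.trans hp.1, hp.2⟩

/-- If `S_α(f)(x) > σ`, the same holds with the cone truncated at some height `r 2^{-N}`. -/
lemma exists_truncSq_gt {r σ : ℝ} (hr : 0 < r) (hσ : 0 < σ) {f : Rn n → ℝ} {x : Rn n}
    (h : σ < Salpha α 1 f x) :
    ∃ N : ℕ, ENNReal.ofReal (σ ^ 2) < truncSq α (r * (1 / 2) ^ N) f x := by
  set T : Set (Rn n × ℝ) := {p | 0 < p.2 ∧ dist x p.1 < 1 * p.2} with hT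
  set T' : ℕ → Set (Rn n × ℝ) := fun N => {p | r * (1 / 2) ^ N ≤ p.2 ∧ dist x p.1 < p.2} with hT'
  set g : Rn n × ℝ → ℝ := fun p => Aalpha α f p.1 p.2 ^ 2 / p.2 ^ (n + 1) with hg
  have h1 : σ ^ 2 < ∫ p in T, g p := (Real.lt_sqrt hσ.le).1 h
  have hmT : MeasurableSet T :=
    ((isOpen_lt continuous_const continuous_snd).inter
      (isOpen_lt (by fun_prop : Continuous fun p : Rn n × ℝ => dist x p.1)
        (by fun_prop : Continuous fun p : Rn n × ℝ => 1 * p.2))).measurableSet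
  have h2 : ENNReal.ofReal (σ ^ 2) < ∫⁻ p in T, ENNReal.ofReal (g p) := by
    by_cases hi : IntegrableOn g T
    · rw [← ofReal_integral_eq_lintegral_ofReal hi]
      · exact (ENNReal.ofReal_lt_ofReal_iff ((by positivity : 0 < σ ^ 2).trans h1)).2 h1
      · filter_upwards [ae_restrict_mem hmT] with p hp
        have := hp.1
        simp only [hg, Pi.zero_apply]; positivity
    · -- the Bochner integral of a non-integrable function is `0`
      rw [integral_undef hi] at h1
      nlinarith
  have hU : T ⊆ ⋃ N, T' N := by
    rintro p ⟨hp1, hp2⟩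
    obtain ⟨N, hN⟩ := exists_pow_lt_of_lt_one (div_pos hp1 hr) (by norm_num : (1 / 2 : ℝ) < 1)
    rw [lt_div_iff₀' hr] at hN
    exact mem_iUnion.2 ⟨N, hN.le, by linarith⟩
  have hmono : Monotone T' := by
    intro N M hNM p hp
    refine ⟨le_trans ?_ hp.1, hp.2⟩
    exact mul_le_mul_of_nonneg_left
      (pow_le_pow_of_le_one (by norm_num) (by norm_num) hNM) hr.le
  have h3 := h2.trans_le (lintegral_mono_set (f := fun p => ENNReal.ofReal (g p)) hU)
  rw [setLIntegral_iUnion_of_directed _ hmono.directed_le] at h3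
  exact lt_iSup_iff.1 h3

/-- It suffices to bound the level sets of the discrete square functions over `r 2^{-N}`,
uniformly in `N`. -/
lemma volume_Salpha_le (hn : 0 < n) (hα0 : 0 < α) (hα1 : α ≤ 1) {f : Rn n → ℝ}
    (hf : LocallyIntegrable f volume) {r σ : ℝ} (hr : 0 < r) (hσ : 0 < σ) (E : Set (Rn n))
    {W : ENNReal} (hW : ∀ N : ℕ,
      volume {x ∈ E | ENNReal.ofReal (σ ^ 2) < sqFun α (r * (1 / 2) ^ N) f x} ≤ W) :
    volume {x ∈ E | σ < Salpha α 1 f x} ≤ W := by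
  set G : ℕ → Set (Rn n) :=
    fun N => {x ∈ E | ENNReal.ofReal (σ ^ 2) < truncSq α (r * (1 / 2) ^ N) f x} with hG
  have hmono : Monotone G := by
    intro N M hNM x hx
    refine ⟨hx.1, hx.2.trans_le (truncSq_anti ?_ f x)⟩
    exact mul_le_mul_of_nonneg_left
      (pow_le_pow_of_le_one (by norm_num) (by norm_num) hNM) hr.le
  calc volume {x ∈ E | σ < Salpha α 1 f x} ≤ volume (⋃ N, G N) := by
        refine measure_mono fun x hx => ?_
        obtain ⟨N, hN⟩ := exists_truncSq_gt hr hσ hx.2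
        exact mem_iUnion.2 ⟨N, hx.1, hN⟩
    _ = ⨆ N, volume (G N) := hmono.measure_iUnion
    _ ≤ W := by
        refine iSup_le fun N => le_trans (measure_mono ?_) (hW N)
        exact fun x hx => ⟨hx.1, hx.2.trans_le
          (truncSq_le_sqFun hn (by positivity) hα0 hα1 hf x)⟩

end

/-! ### The Morrey estimate -/

section

variable {n : ℕ} {δ : ℝ} {α : ℝ}

lemma doubling_pow {Φ : ℝ → ℝ} {D : ℝ} (hD1 : 1 ≤ D)
    (hΦdoub : ∀ r : ℝ, 0 < r → Φ (2 * r) ≤ D * Φ r) {r : ℝ} (hr : 0 < r) (k : ℕ) :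
    Φ (2 ^ k * r) ≤ D ^ k * Φ r := by
  induction k with
  | zero => simp
  | succ k ih =>
    calc Φ (2 ^ (k + 1) * r) = Φ (2 * (2 ^ k * r)) := by congr 1; ring
      _ ≤ D * Φ (2 ^ k * r) := hΦdoub _ (by positivity)
      _ ≤ D * (D ^ k * Φ r) := mul_le_mul_of_nonneg_left ih (by linarith)
      _ = _ := by ring

lemma morrey_ball {Φ : ℝ → ℝ} {D : ℝ} (hD1 : 1 ≤ D)
    (hΦdoub : ∀ r : ℝ, 0 < r → Φ (2 * r) ≤ D * Φ r) {f : Rn n → ℝ} {A : ℝ} (hA : 0 ≤ A)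
    (hM : MorreyBound 1 Φ f A) (c : Rn n) {r : ℝ} (hr : 0 < r) (k : ℕ) :
    ∫ x in ball c (2 ^ k * r), |f x| ≤ A * (D ^ k * Φ r) := by
  have h := hM c (2 ^ k * r) (by positivity)
  simp only [Real.rpow_one] at h
  exact h.trans (mul_le_mul_of_nonneg_left (doubling_pow hD1 hΦdoub hr k) hA)

/-- The geometric factor of the far part: the number of cubes per generation, summed with the
squared ratio `(D/2ⁿ)²`. -/
def farL (n : ℕ) (D : ℝ) : ℝ := (3 * dil n) ^ n / (1 - (D / 2 ^ n) ^ 2)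

lemma ratio_sq_lt {D : ℝ} (hD1 : 1 ≤ D) (hD2 : D < 2 ^ n) : (D / 2 ^ n) ^ 2 < 1 := by
  have h1 : D / 2 ^ n < 1 := (div_lt_one (by positivity)).2 hD2
  exact pow_lt_one₀ (by positivity) h1 two_ne_zero

lemma farL_pos {D : ℝ} (hD1 : 1 ≤ D) (hD2 : D < 2 ^ n) : 0 < farL n D := by
  have := ratio_sq_lt hD1 hD2
  have := dil_pos n
  have : 0 < 1 - (D / 2 ^ n) ^ 2 := by linarith
  unfold farL; positivity

/-- The part `g` of `f` away from `B(x₀, 2^q r)` only meets the enlarged balls of the cubes of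
side `2^k r`, `k ≥ 0`, which touch `B(x₀, r)`.  The averages over them decay like `(D/2ⁿ)^k`. -/
lemma sqFun_far_le (hn : 0 < n) (hα0 : 0 < α) (hα1 : α ≤ 1) {Φ : ℝ → ℝ} {D : ℝ}
    (hΦpos : ∀ r : ℝ, 0 < r → 0 < Φ r) (hD1 : 1 ≤ D) (hD2 : D < 2 ^ n)
    (hΦdoub : ∀ r : ℝ, 0 < r → Φ (2 * r) ≤ D * Φ r) {f g : Rn n → ℝ}
    (hf : LocallyIntegrable f volume) (hg : LocallyIntegrable g volume) {A : ℝ} (hA : 0 ≤ A)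
    (hM : MorreyBound 1 Φ f A) {q : ℕ} (hq : 2 * dil n + 1 ≤ 2 ^ q) {x₀ : Rn n} {r : ℝ}
    (hr : 0 < r) (hgf : ∀ z, |g z| ≤ |f z|) (hg0 : ∀ z ∈ ball x₀ (2 ^ q * r), g z = 0)
    {x : Rn n} (hx : x ∈ ball x₀ r) (N : ℕ) :
    sqFun α (r * (1 / 2) ^ N) g x ≤
      ENNReal.ofReal ((supC n * D ^ q * (A * Φ r) / r ^ n) ^ 2 * farL n D) := by
  set δ := r * (1 / 2) ^ N with hδdef
  have hδ : 0 < δ := by positivity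
  have hd := dil_pos n
  have hsc := supC_pos n
  have hΦr := hΦpos r hr
  have hD0 : 0 < D := by linarith
  set E := supC n * D ^ q * (A * Φ r) / r ^ n with hE
  have hE0 : 0 ≤ E := by positivity
  set κ := (D / 2 ^ n) ^ 2 with hκ
  have hκ0 : 0 ≤ κ := by positivity
  have hκ1 : κ < 1 := ratio_sq_lt hD1 hD2
  have hsN : side δ N = r := by
    simp only [side, hδdef]
    rw [mul_assoc, ← mul_pow]; norm_num
  have hsmall : ∀ Q : ℕ × (Fin n → ℤ), x ∈ bigBall δ Q → Q.1 < N → aQ α δ g Q = 0 := by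
    intro Q hxQ hQ
    have hs : side δ Q.1 ≤ r := hsN ▸ side_mono hδ hQ.le
    have hint : ∫ z in bigBall δ Q, |g z| = 0 := by
      refine setIntegral_eq_zero_of_forall_eq_zero fun z hz => ?_
      rw [hg0 z, abs_zero]
      have h1 := mem_closedBall.1 hz
      have h2 := mem_closedBall'.1 hxQ
      have h3 := mem_ball.1 hx
      have h4 := dist_triangle4 z (corner δ Q) x x₀
      have h5 : dil n * side δ Q.1 ≤ dil n * r := by gcongr
      have h6 : (2 * dil n + 1) * r ≤ 2 ^ q * r := by gcongr
      exact mem_ball.2 (by linarith)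
    have h := aQ_le_ball (Q := Q) hn hδ hα0 hα1 hg
    rw [hint, mul_zero] at h
    exact le_antisymm h (aQ_nonneg g)
  have hlarge : ∀ (k : ℕ) (m : Fin n → ℤ), aQ α δ g (N + k, m) ≤ E * (D / 2 ^ n) ^ k := by
    intro k m
    have hs : side δ (N + k) = 2 ^ k * r := by rw [side_add, hsN, mul_comm]
    have hsub : bigBall δ (N + k, m) ⊆ ball (corner δ (N + k, m)) (2 ^ (q + k) * r) := by
      refine closedBall_subset_ball ?_
      simp only [hs]
      have h0 : (0:ℝ) < 2 ^ k * r := by positivity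
      calc dil n * (2 ^ k * r) < 2 ^ q * (2 ^ k * r) := by gcongr; linarith
        _ = _ := by ring
    have hfb : IntegrableOn (fun z => |f z|) (ball (corner δ (N + k, m)) (2 ^ (q + k) * r)) :=
      Integrable.abs ((hf.integrableOn_isCompact (isCompact_closedBall _ _)).mono_set
        ball_subset_closedBall)
    have h1 : ∫ z in bigBall δ (N + k, m), |g z| ≤ A * (D ^ (q + k) * Φ r) :=
      calc ∫ z in bigBall δ (N + k, m), |g z| ≤ ∫ z in bigBall δ (N + k, m), |f z| :=
            integral_mono (Integrable.abs (integrableOn_bigBall hg _))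
              (Integrable.abs (integrableOn_bigBall hf _)) hgf
        _ ≤ ∫ z in ball (corner δ (N + k, m)) (2 ^ (q + k) * r), |f z| :=
            setIntegral_mono_set hfb (ae_of_all _ fun _ => abs_nonneg _) hsub.eventuallyLE
        _ ≤ _ := morrey_ball hD1 hΦdoub hA hM _ hr _
    calc aQ α δ g (N + k, m)
        ≤ (side δ (N + k) ^ n)⁻¹ * supC n * ∫ z in bigBall δ (N + k, m), |g z| :=
          aQ_le_ball hn hδ hα0 hα1 hg
      _ ≤ (side δ (N + k) ^ n)⁻¹ * supC n * (A * (D ^ (q + k) * Φ r)) := by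
          have := side_pos hδ (N + k)
          gcongr
      _ = _ := by
          rw [hs, hE, mul_pow, div_pow, pow_add, ← pow_mul, ← pow_mul, mul_comm k n]
          field_simp
  set u : ℕ × (Fin n → ℤ) → ℝ := fun Q => (bigBall δ Q).indicator (fun _ => aQ α δ g Q ^ 2) x
    with hu
  have hu0 : ∀ Q, 0 ≤ u Q := fun Q => indicator_nonneg (fun _ _ => by positivity) _
  have hlev : ∀ j (M : Finset (Fin n → ℤ)), ∑ m ∈ M, u (j, m) ≤
      if j < N then 0 else (E ^ 2 * (3 * dil n) ^ n) * κ ^ (j - N) := by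
    intro j M
    split_ifs with hj
    · refine Finset.sum_nonpos fun m _ => ?_
      simp only [hu, indicator]
      split_ifs with hxQ
      · rw [hsmall _ hxQ hj]; simp
      · rfl
    · obtain ⟨k, rfl⟩ := Nat.exists_eq_add_of_le (not_lt.1 hj)
      have hs := side_pos hδ (N + k)
      have h := level_sum_le hδ (N + k) M x (ρ := dil n * side δ (N + k)) (K := E ^ 2 * κ ^ k)
        (by positivity) (by nlinarith [dil_ge_two n]) (fun m => u (N + k, m))
        (fun m => ?_) (fun m hm => ?_)
      · refine h.trans (le_of_eq ?_)
        rw [Nat.add_sub_cancel_left, ← mul_assoc, mul_div_cancel_right₀ _ hs.ne']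
        ring
      · simp only [hu, indicator]
        split_ifs
        · calc aQ α δ g (N + k, m) ^ 2 ≤ (E * (D / 2 ^ n) ^ k) ^ 2 :=
                pow_le_pow_left₀ (aQ_nonneg g) (hlarge k m) 2
            _ = _ := by rw [hκ]; ring
        · positivity
      · refine indicator_of_notMem (fun hxQ => ?_) _
        exact absurd (mem_closedBall'.1 hxQ) (not_le.2 hm)
  have hfin := tsum_le_of_sum_ofReal u hu0 _ (sum_le_of_levels u hu0 _ _ hlev
    (fun J => sum_tail_geom_le hκ0 hκ1 (by positivity) N J))
  have e : sqFun α δ g x = ∑' Q, ENNReal.ofReal (u Q) := by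
    refine tsum_congr fun Q => ?_
    simp only [hu, indicator]
    split_ifs <;> simp
  rw [e]
  refine hfin.trans (le_of_eq ?_)
  rw [farL, mul_div_assoc]

lemma sqFun_add_le (hn : 0 < n) (hδ : 0 < δ) (hα0 : 0 < α) (hα1 : α ≤ 1) {f g : Rn n → ℝ}
    (hf : LocallyIntegrable f volume) (hg : LocallyIntegrable g volume) (x : Rn n) :
    sqFun α δ (fun z => f z + g z) x ≤ 2 * sqFun α δ f x + 2 * sqFun α δ g x := by
  simp only [sqFun]
  rw [← ENNReal.tsum_mul_left, ← ENNReal.tsum_mul_left, ← ENNReal.tsum_add]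
  refine ENNReal.tsum_le_tsum fun Q => ?_
  simp only [indicator]
  split_ifs
  · exact ofReal_sq_add_le (aQ_nonneg _) (aQ_add_le hn hδ hα0 hα1 hf hg)
  · simp

end

/-- **Theorem 1.2.** Let `0 < α ≤ 1` and `p = 1`.  If `Φ` is positive increasing on `(0,∞)`
and doubling with constant `1 ≤ D < 2ⁿ`, then `S_α` is bounded from `L^{1,Φ}(ℝⁿ)` to
`WL^{1,Φ}(ℝⁿ)`. -/
theorem salpha_weak_morrey_bounded
    (n : ℕ) (hn : 0 < n) (α D : ℝ) (hα0 : 0 < α) (hα1 : α ≤ 1)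
    (Φ : ℝ → ℝ) (hΦpos : ∀ r : ℝ, 0 < r → 0 < Φ r)
    (hΦmono : ∀ r s : ℝ, 0 < r → r ≤ s → Φ r ≤ Φ s)
    (hD1 : 1 ≤ D) (hD2 : D < 2 ^ n)
    (hΦdoub : ∀ r : ℝ, 0 < r → Φ (2 * r) ≤ D * Φ r) :
    ∃ C : ℝ, 0 < C ∧ ∀ f : Rn n → ℝ, LocallyIntegrable f volume →
      ∀ A : ℝ, 0 ≤ A → MorreyBound 1 Φ f A →
        WeakMorreyBound Φ (Salpha α 1 f) (C * A) := by
  obtain ⟨q, hq⟩ := pow_unbounded_of_one_lt (2 * dil n + 1) (by norm_num : (1:ℝ) < 2)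
  have hL := farL_pos hD1 hD2
  have hsc := supC_pos n
  have hv := unitVol_pos n
  have hw := weakC_pos n hα0
  have hD0 : 0 < D := by linarith
  set L := farL n D + 1 with hLdef
  have hL0 : 0 < L := by positivity
  refine ⟨2 * (supC n * D ^ q) * L * unitVol n + 2 * weakC n α * D ^ q, by positivity, ?_⟩
  intro f hf A hA hM x₀ r hr σ hσ
  have hΦr := hΦpos r hr
  set E := supC n * D ^ q * (A * Φ r) / r ^ n with hE
  have hE0 : 0 ≤ E := by positivity
  rcases le_or_gt σ (2 * (E * L)) with hsm | hbig
  · -- the level is below the far-part bound, and the trivial bound by `|B(x₀, r)|` suffices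
    have hvol : (volume {x ∈ ball x₀ r | σ < Salpha α 1 f x}).toReal ≤ r ^ n * unitVol n := by
      refine ENNReal.toReal_le_of_le_ofReal (by positivity) ?_
      rw [← volume_closedBall_eq x₀ hr.le]
      exact measure_mono fun x hx => ball_subset_closedBall hx.1
    calc σ * (volume {x ∈ ball x₀ r | σ < Salpha α 1 f x}).toReal
        ≤ (2 * (E * L)) * (r ^ n * unitVol n) := by gcongr
      _ = 2 * (supC n * D ^ q) * L * unitVol n * A * Φ r := by rw [hE]; field_simp
      _ ≤ _ := by
          have : 0 ≤ 2 * weakC n α * D ^ q * (A * Φ r) := by positivity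
          linarith
  · set U := ball x₀ (2 ^ q * r) with hU
    have hUm : MeasurableSet U := measurableSet_ball
    have hfU : IntegrableOn f U :=
      (hf.integrableOn_isCompact (isCompact_closedBall _ _)).mono_set ball_subset_closedBall
    set f₁ := U.indicator f with hf₁
    set f₂ := Uᶜ.indicator f with hf₂
    have hi₁ : Integrable f₁ := (integrable_indicator_iff hUm).2 hfU
    have hl₂ : LocallyIntegrable f₂ volume := hf.indicator hUm.compl
    have hsum : f = fun z => f₁ z + f₂ z := by
      funext z
      exact (congrFun (indicator_self_add_compl U f) z).symm
    have hK : ∀ z, ‖x₀‖ + 2 ^ q * r < ‖z‖ → f₁ z = 0 := by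
      intro z hz
      refine indicator_of_notMem (fun hzU => ?_) _
      have h1 : ‖z - x₀‖ < 2 ^ q * r := mem_ball_iff_norm.1 hzU
      have h2 := norm_le_norm_add_norm_sub x₀ z
      rw [norm_sub_rev] at h2
      linarith
    have hint : ∫ z, |f₁ z| ≤ A * (D ^ q * Φ r) := by
      have e : ∀ z, |f₁ z| = U.indicator (fun z => |f z|) z := by
        intro z; simp only [hf₁, indicator]; split_ifs <;> simp
      simp only [e]
      rw [integral_indicator hUm]
      exact morrey_ball hD1 hΦdoub hA hM x₀ hr q
    have hvol : (volume {x ∈ ball x₀ r | σ < Salpha α 1 f x}).toReal ≤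
        weakC n α * (A * (D ^ q * Φ r)) / (σ / 2) := by
      refine ENNReal.toReal_le_of_le_ofReal (by positivity) ?_
      refine volume_Salpha_le hn hα0 hα1 hf hr hσ _ fun N => ?_
      have hδ : 0 < r * (1 / 2) ^ N := by positivity
      refine (measure_mono ?_).trans ((weak_type hn hδ hα0 hα1 hi₁ hK (half_pos hσ)).trans
        (ENNReal.ofReal_le_ofReal (by gcongr)))
      rintro x ⟨hx1, hx2⟩
      have hadd : sqFun α (r * (1 / 2) ^ N) f x ≤ 2 * sqFun α (r * (1 / 2) ^ N) f₁ x +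
          2 * sqFun α (r * (1 / 2) ^ N) f₂ x := by
        conv_lhs => rw [hsum]
        exact sqFun_add_le hn hδ hα0 hα1 hi₁.locallyIntegrable hl₂ x
      have hfar := sqFun_far_le hn hα0 hα1 hΦpos hD1 hD2 hΦdoub hf hl₂ hA hM hq.le hr
        (fun z => by simp only [hf₂, indicator]; split_ifs <;> simp)
        (fun z hz => indicator_of_notMem (notMem_compl_iff.2 hz) _) hx1 N
      have hfar2 : E ^ 2 * farL n D ≤ (σ / 2) ^ 2 :=
        calc E ^ 2 * farL n D ≤ E ^ 2 * L ^ 2 := by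
              gcongr; nlinarith
          _ = (E * L) ^ 2 := by ring
          _ ≤ _ := by
              have : 0 ≤ E * L := by positivity
              gcongr; linarith
      by_contra hcon
      refine (lt_irrefl _ (hx2.trans_le (hadd.trans ?_)))
      have h1 : sqFun α (r * (1 / 2) ^ N) f₁ x ≤ ENNReal.ofReal ((σ / 2) ^ 2) := not_lt.1 hcon
      have h2 := hfar.trans (ENNReal.ofReal_le_ofReal hfar2)
      calc 2 * sqFun α (r * (1 / 2) ^ N) f₁ x + 2 * sqFun α (r * (1 / 2) ^ N) f₂ x
          ≤ 2 * ENNReal.ofReal ((σ / 2) ^ 2) + 2 * ENNReal.ofReal ((σ / 2) ^ 2) := by gcongr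
        _ = ENNReal.ofReal (σ ^ 2) := by
          rw [(by norm_num : (2 : ENNReal) = ENNReal.ofReal 2), ← ENNReal.ofReal_mul (by norm_num),
            ← ENNReal.ofReal_add (by positivity) (by positivity)]
          congr 1; ring
    calc σ * (volume {x ∈ ball x₀ r | σ < Salpha α 1 f x}).toReal
        ≤ σ * (weakC n α * (A * (D ^ q * Φ r)) / (σ / 2)) := by gcongr
      _ = 2 * weakC n α * D ^ q * A * Φ r := by field_simp
      _ ≤ _ := by
          have : 0 ≤ 2 * (supC n * D ^ q) * L * unitVol n * (A * Φ r) := by positivity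
          linarith
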